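/- arXiv:2009.01025 — 8 statements merged into one kernel-verified Lean document; each statement's English description precedes it below -/
import Mathlib

section
/- Let q be a prime power, K a finite field with q elements, and G = PGL(2,K) the projective general linear group of degree 2 over K. Let D be a subgroup of G isomorphic (as an abstract group) to the dihedral group of order 2(q+1), and let A = {g ∈ G : g^{q+1} = 1 and g^2 ≠ 1}. Then for every g ∈ G, the number of pairs (x, d) ∈ A × D with x·d = g equals q if q is even, and equals q − 1 if q is odd. -/
/-- The projective general linear group of degree 2 over `K`:
the quotient of `GL(2, K)` by its center. -/
abbrev PGL2 (K : Type*) [Field K] :=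
  GL (Fin 2) K ⧸ Subgroup.center (GL (Fin 2) K)

/-!
Let `q = #K` and let `C` be the rotation subgroup of `D`. A nontrivial `h ∈ PGL(2, K)` fixes at most
two points of the projective line `ℙ¹`, and all its other cycles have length `orderOf h`. Hence the
set `A` consists of the fixed-point-free elements that are not involutions, and `C` acts sharply
transitively on `ℙ¹`; in particular `C` is its own centralizer.

For `g ∈ D` the count takes place inside the dihedral group. Let `g ∉ D`. Writing a generator of `C`
as a matrix `x`, the elements of `gC` are represented by the matrices `g (u + v x)`; as the
involutions of `PGL(2, K)` are the classes of trace `0`, each of the two cosets of `C` in `gD`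
contains exactly one involution. The involution `t` of the coset other than `gC` inverts every
`h ∈ gC`, so it either swaps the two fixed points of `h` or fixes its only one. By sharp
transitivity every point of `ℙ¹` is fixed by exactly one `h ∈ gC`, so `2 N = q + 1 + #(fix t)` for
the number `N` of `h ∈ gC` that have a fixed point. Adding up the `q + 1 - N` fixed-point-free
elements of both cosets and removing the involutions among them gives the result.
-/

open MulAction

lemma mul_mul_inv_eq_inv_iff_of_sq_eq_one {G : Type*} [Group G] {h t : G} (ht : t ^ 2 = 1) :
    t * h * t⁻¹ = h⁻¹ ↔ (t * h) ^ 2 = 1 := by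
  have hinv : t⁻¹ = t := inv_eq_of_mul_eq_one_left ((sq t).symm.trans ht)
  rw [hinv, ← mul_eq_one_iff_eq_inv, sq, mul_assoc (t * h)]

lemma smul_mem_fixedBy_of_mul_mul_inv_eq_inv {G X : Type*} [Group G] [MulAction G X] {h t : G}
    {a : X} (hconj : t * h * t⁻¹ = h⁻¹) (ha : a ∈ fixedBy X h) : t • a ∈ fixedBy X h := by
  rw [← fixedBy_inv, mem_fixedBy, ← hconj, mul_smul, inv_smul_smul, mul_smul, ha]

lemma card_dvd_card_of_stabilizer_eq_bot {G X : Type*} [Group G] [MulAction G X]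
    (hfree : ∀ a : X, stabilizer G a = ⊥) : Nat.card G ∣ Nat.card X := by
  rw [Nat.card_congr (selfEquivOrbitsQuotientProd hfree), Nat.card_prod]
  exact dvd_mul_left _ _

lemma orderOf_dvd_card_compl_fixedBy {G X : Type*} [Group G] [MulAction G X] {h : G}
    (hfree : ∀ (a : X) (k : ℤ), h • a ≠ a → h ^ k • a = a → h ^ k = 1) :
    orderOf h ∣ Nat.card ↥(fixedBy X h)ᶜ := by
  let moved : SubMulAction (Subgroup.zpowers h) X :=
    { carrier := (fixedBy X h)ᶜ
      smul_mem' := by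
        rintro ⟨_, k, rfl⟩ a ha
        exact (smul_zpow_movedBy_eq_of_commute (α := X) (Commute.refl h) k).subset
          (Set.smul_mem_smul_set ha) }
  rw [← Nat.card_zpowers]
  refine card_dvd_card_of_stabilizer_eq_bot (X := moved) fun a ↦ ?_
  rw [eq_bot_iff]
  rintro ⟨_, k, rfl⟩ hk
  exact Subtype.ext (hfree a k a.2 (congrArg Subtype.val hk))

/-- The two features of the action of `PGL(2, K)` on the projective line that the counting argument
needs: a nontrivial element fixes at most two points, and an element exchanging two distinct points
is an involution. -/
class IsMoebiusAction (G X : Type*) [Group G] [MulAction G X] : Prop where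
  eq_one_of_smul_eq : ∀ {h : G} {a b c : X}, a ≠ b → a ≠ c → b ≠ c →
    h • a = a → h • b = b → h • c = c → h = 1
  sq_eq_one_of_swap : ∀ {h : G} {a b : X}, a ≠ b → h • a = b → h • b = a → h ^ 2 = 1

namespace IsMoebiusAction

variable {G X : Type*} [Group G] [MulAction G X] [IsMoebiusAction G X] {h t : G}

lemma zpow_eq_one_of_zpow_smul_eq {a : X} {k : ℤ} (ha : h • a ≠ a) (hk : h ^ k • a = a) :
    h ^ k = 1 := by
  have hcomm (b : X) : h ^ k • h • b = h • h ^ k • b := by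
    rw [smul_smul, smul_smul, (Commute.refl h).zpow_left k]
  by_cases hswap : h • h • a = a
  · have hsq : h ^ 2 = 1 := sq_eq_one_of_swap ha.symm rfl hswap
    obtain ⟨m, rfl | rfl⟩ := k.even_or_odd'
    · rw [zpow_mul, zpow_ofNat, hsq, one_zpow]
    · rw [zpow_add_one, zpow_mul, zpow_ofNat, hsq, one_zpow, one_mul] at hk
      exact absurd hk ha
  · refine eq_one_of_smul_eq ha.symm (Ne.symm hswap) ((smul_left_cancel_iff h).not.2 ha.symm)
      hk ?_ ?_
    · rw [hcomm, hk]
    · rw [hcomm, hcomm, hk]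

lemma fixedBy_eq_pair {a b : X} (hh : h ≠ 1) (hab : a ≠ b) (ha : h • a = a) (hb : h • b = b) :
    fixedBy X h = {a, b} := by
  refine Set.Subset.antisymm (fun c hc ↦ ?_) (Set.pair_subset ha hb)
  by_contra! hcab
  simp only [Set.mem_insert_iff, Set.mem_singleton_iff, not_or] at hcab
  exact hh (eq_one_of_smul_eq hab (Ne.symm hcab.1) (Ne.symm hcab.2) ha hb hc)

variable (X)

lemma orderOf_dvd_card_compl_fixedBy (h : G) : orderOf h ∣ Nat.card ↥(fixedBy X h)ᶜ :=
  _root_.orderOf_dvd_card_compl_fixedBy fun _ _ ↦ zpow_eq_one_of_zpow_smul_eq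

lemma ncard_fixedBy_le_two (hh : h ≠ 1) : (fixedBy X h).ncard ≤ 2 := by
  by_contra! hlt
  obtain ⟨a, b, c, ha, hb, hc, hab, hac, hbc⟩ :=
    (Set.two_lt_ncard_iff (Set.finite_of_ncard_pos (by lia))).1 hlt
  exact hh (eq_one_of_smul_eq hab hac hbc ha hb hc)

variable {X} in
lemma sq_eq_one_of_smul_eq_self [Finite X] {a : X} (ha : h • a = a) (hpow : h ^ Nat.card X = 1) :
    h ^ 2 = 1 := by
  by_contra hsq
  have hh : h ≠ 1 := by rintro rfl; exact hsq (one_pow 2)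
  have hdvd : orderOf h ∣ (fixedBy X h).ncard := by
    have hcompl := orderOf_dvd_card_compl_fixedBy X h
    rw [Nat.card_coe_set_eq] at hcompl
    rw [Nat.dvd_add_iff_left hcompl, Set.ncard_add_ncard_compl]
    exact orderOf_dvd_of_pow_eq_one hpow
  have hpos : 0 < (fixedBy X h).ncard := (Set.ncard_pos).2 ⟨a, ha⟩
  have hle := ncard_fixedBy_le_two X hh
  refine hsq (orderOf_dvd_iff_pow_eq_one.1 (hdvd.trans ?_))
  interval_cases (fixedBy X h).ncard <;> norm_num

lemma pow_card_eq_one_and_sq_ne_one_iff [Finite X] :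
    h ^ Nat.card X = 1 ∧ h ^ 2 ≠ 1 ↔ fixedBy X h = ∅ ∧ h ^ 2 ≠ 1 := by
  refine and_congr_left fun hsq ↦ ⟨fun hpow ↦ ?_, fun hfree ↦ ?_⟩
  · exact Set.eq_empty_of_forall_notMem fun a ha ↦ hsq (sq_eq_one_of_smul_eq_self ha hpow)
  · have hdvd := orderOf_dvd_card_compl_fixedBy X h
    rw [hfree, Set.compl_empty, Nat.card_univ] at hdvd
    exact orderOf_dvd_iff_pow_eq_one.1 hdvd

lemma ncard_fixedBy_add_ite_of_sq_eq_one [Finite X] (ht : t ≠ 1) (hsq : t ^ 2 = 1) :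
    (fixedBy X t).ncard + (if (fixedBy X t).ncard = 0 then 2 else 0) =
      if Even (Nat.card X) then 2 else 1 := by
  have hle := ncard_fixedBy_le_two X ht
  have hdvd := orderOf_dvd_card_compl_fixedBy X t
  rw [orderOf_eq_prime hsq ht, Nat.card_coe_set_eq] at hdvd
  have hadd := Set.ncard_add_ncard_compl (fixedBy X t)
  split_ifs <;> grind

end IsMoebiusAction

lemma sum_ncard_fixedBy_mul_inter {G X ι : Type*} [Group G] [MulAction G X] [Fintype ι]
    [Finite X] {u : ι → G}
    (hu : ∀ a : X, Function.Bijective fun i ↦ u i • a) (γ : G) (s : Set X) :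
    ∑ i, (fixedBy X (γ * u i) ∩ s).ncard = s.ncard := by
  have mem_fixedBy_iff (i : ι) (a : X) : a ∈ fixedBy X (γ * u i) ↔ u i • a = γ⁻¹ • a := by
    rw [mem_fixedBy, mul_smul, eq_inv_smul_iff]
  have hcover : s = ⋃ i, fixedBy X (γ * u i) ∩ s := by
    ext a
    obtain ⟨i, hi⟩ := (hu a).2 (γ⁻¹ • a)
    simpa using fun _ ↦ ⟨i, (mem_fixedBy_iff i a).2 hi⟩
  have hdisj : Pairwise (Function.onFun Disjoint fun i ↦ fixedBy X (γ * u i) ∩ s) :=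
    fun i j hij ↦ Set.disjoint_left.2 fun a ⟨hi, _⟩ ⟨hj, _⟩ ↦ hij <| (hu a).1 <|
      ((mem_fixedBy_iff i a).1 hi).trans ((mem_fixedBy_iff j a).1 hj).symm
  conv_rhs => rw [hcover]
  rw [Set.ncard_iUnion_of_finite (fun _ ↦ Set.toFinite _) hdisj, finsum_eq_sum_of_fintype]

section Dihedral

open DihedralGroup

lemma ncard_setOf_dihedralGroup {n : ℕ} [NeZero n] (P : DihedralGroup n → Prop) :
    {d | P d}.ncard = {i | P (r i)}.ncard + {i | P (sr i)}.ncard := by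
  simp only [← Nat.card_coe_set_eq, Set.coe_ofPred]
  rw [← Nat.card_sum, Nat.card_congr (equivSum.subtypeEquiv (q := fun x ↦ P (equivSum.symm x))
    fun d ↦ by rw [Equiv.symm_apply_apply])]
  exact Nat.card_congr Equiv.subtypeSum

lemma ncard_setOf_two_nsmul_eq_zero_zmod (n : ℕ) [NeZero n] :
    {i : ZMod n | 2 • i = 0}.ncard = if Even n then 2 else 1 := by
  have hker := IsAddCyclic.card_nsmulAddMonoidHom_ker (ZMod n) 2
  rw [Nat.card_zmod] at hker
  refine hker.trans ?_
  split_ifs with hn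
  · exact Nat.gcd_eq_right hn.two_dvd
  · exact Nat.coprime_two_right.2 (Nat.not_even_iff_odd.1 hn)

lemma ncard_setOf_pow_eq_one_and_sq_ne_one_dihedralGroup (n : ℕ) [NeZero n] :
    {d : DihedralGroup n | d ^ n = 1 ∧ d ^ 2 ≠ 1}.ncard + (if Even n then 2 else 1) = n := by
  have hr : {i : ZMod n | r i ^ n = 1 ∧ r i ^ 2 ≠ 1} = {i | 2 • i = 0}ᶜ := by
    ext i
    simp [one_def, -r_zero, mul_comm i]
  have hsr : {i : ZMod n | sr i ^ n = 1 ∧ sr i ^ 2 ≠ 1} = ∅ := by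
    ext i
    simp [sq]
  rw [ncard_setOf_dihedralGroup, hr, hsr, Set.ncard_empty, add_zero,
    ← ncard_setOf_two_nsmul_eq_zero_zmod, add_comm, Set.ncard_add_ncard_compl, Nat.card_zmod]

lemma ncard_pow_eq_one_and_sq_ne_one_add_of_mem_range {n : ℕ} [NeZero n] {G : Type*}
    [Group G] {φ : DihedralGroup n →* G} (hφ : Function.Injective φ) {γ : G} (hγ : γ ∈ φ.range) :
    {d | (γ * φ d) ^ n = 1 ∧ (γ * φ d) ^ 2 ≠ 1}.ncard
      + (if Even n then 2 else 1) = n := by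
  obtain ⟨c, rfl⟩ := hγ
  have hpow (d : DihedralGroup n) (k : ℕ) :
      (φ c * φ d) ^ k = 1 ↔ (c * d) ^ k = 1 := by
    rw [← map_mul, ← map_pow, map_eq_one_iff φ hφ]
  have hset : {d | (φ c * φ d) ^ n = 1 ∧ (φ c * φ d) ^ 2 ≠ 1} =
      Equiv.mulLeft c ⁻¹' {d | d ^ n = 1 ∧ d ^ 2 ≠ 1} := by
    ext d
    simp only [Ne, hpow]
    rfl
  rw [hset, Set.ncard_preimage_of_injective_subset_range (Equiv.injective _)
      (Set.subset_univ _ |>.trans (Equiv.range_eq_univ _).superset),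
    ncard_setOf_pow_eq_one_and_sq_ne_one_dihedralGroup]

namespace IsMoebiusAction

variable {G X : Type*} [Group G] [MulAction G X] [IsMoebiusAction G X]
  {n : ℕ} {φ : DihedralGroup n →* G}

lemma r_one_smul_ne (hφ : Function.Injective φ) (hX : Nat.card X = n) (hn : 3 ≤ n) (a : X) :
    φ (r 1) • a ≠ a := by
  have : Finite X := Nat.finite_of_card_ne_zero (by lia)
  have horder : orderOf (φ (r 1)) = n := (orderOf_injective φ hφ _).trans orderOf_r_one
  intro ha
  have hsq : φ (r 1) ^ 2 = 1 :=
    sq_eq_one_of_smul_eq_self ha (by rw [hX, ← orderOf_dvd_iff_pow_eq_one, horder])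
  have := Nat.le_of_dvd two_pos (orderOf_dvd_of_pow_eq_one hsq)
  lia

lemma bijective_r_smul (hφ : Function.Injective φ) (hX : Nat.card X = n) (hn : 3 ≤ n) (a : X) :
    Function.Bijective fun i ↦ φ (r i) • a := by
  have : Finite X := Nat.finite_of_card_ne_zero (by lia)
  refine Function.Injective.bijective_of_nat_card_le (fun i j hij ↦ ?_)
    (by rw [hX, Nat.card_zmod])
  obtain ⟨k, hk⟩ := ZMod.intCast_surjective (i - j)
  have hpow : φ (r 1) ^ k = (φ (r j))⁻¹ * φ (r i) := by
    rw [← map_zpow, r_one_zpow, hk, ← map_inv, ← map_mul, inv_r, r_mul_r, neg_add_eq_sub]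
  have hfix : φ (r 1) ^ k • a = a := by
    rw [hpow, mul_smul, inv_smul_eq_iff]
    exact hij
  have hone := zpow_eq_one_of_zpow_smul_eq (r_one_smul_ne hφ hX hn a) hfix
  rw [hpow, inv_mul_eq_one] at hone
  exact (r.inj (hφ hone)).symm

lemma exists_r_eq_of_commute (hφ : Function.Injective φ) (hX : Nat.card X = n) (hn : 3 ≤ n)
    {y : G} (hy : Commute (φ (r 1)) y) : ∃ i, φ (r i) = y := by
  obtain ⟨a⟩ : Nonempty X := (Nat.card_ne_zero.1 (by lia)).1
  obtain ⟨i, hi : φ (r i) • a = y • a⟩ := (bijective_r_smul hφ hX hn a).2 (y • a)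
  have hcomm (j : ZMod n) : Commute (φ (r j)) (y⁻¹ * φ (r i)) := by
    obtain ⟨k, rfl⟩ := ZMod.intCast_surjective j
    rw [← r_one_zpow, map_zpow]
    refine Commute.zpow_left (hy.inv_right.mul_right (Commute.map ?_ φ)) k
    rw [commute_iff_eq, r_mul_r, r_mul_r, add_comm]
  have hfix : fixedBy X (y⁻¹ * φ (r i)) = Set.univ := by
    refine Set.eq_univ_of_forall fun b ↦ ?_
    obtain ⟨j, rfl⟩ := (bijective_r_smul hφ hX hn a).2 b
    rw [mem_fixedBy, smul_smul, ← hcomm j, mul_smul, mul_smul, hi, inv_smul_smul]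
  refine ⟨i, (inv_mul_eq_one.1 ?_).symm⟩
  by_contra hne
  have hle := ncard_fixedBy_le_two X hne
  rw [hfix, Set.ncard_univ, hX] at hle
  lia

end IsMoebiusAction

end Dihedral

lemma sum_ite_zero_add_mul_ncard {ι : Type*} [Fintype ι] (P : ι → Prop) [DecidablePred P]
    (c : ℕ) : ∑ i, (if P i then 0 else c) + c * {i | P i}.ncard = c * Fintype.card ι := by
  rw [Set.ncard_eq_toFinset_card', Set.toFinset_ofPred, Finset.sum_ite, Finset.sum_const_zero,
    zero_add, Finset.sum_const, smul_eq_mul, mul_comm, ← mul_add, add_comm,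
    Finset.card_filter_add_card_filter_not, Finset.card_univ]

section Range

variable {H G : Type*} [Group H] [Group G]

lemma mul_map_mem_range_iff (φ : H →* G) (d : H) {γ : G} : γ * φ d ∈ φ.range ↔ γ ∈ φ.range :=
  Subgroup.mul_mem_cancel_right _ ⟨d, rfl⟩

lemma mul_map_ne_one_of_notMem_range {φ : H →* G} {γ : G} (hγ : γ ∉ φ.range) (d : H) :
    γ * φ d ≠ 1 :=
  fun h ↦ hγ ((mul_map_mem_range_iff φ d).1 (h ▸ φ.range.one_mem))

end Range

section PGL2

open Matrix MatrixGroups ProjGenLinGroup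
open Projectivization hiding mk
open scoped LinearAlgebra.Projectivization

local notation "ℙ¹(" k ")" => ℙ k (Fin 2 → k)

variable {K : Type*} [Field K]

section Matrix

lemma matrix_mul_self_fin_two {R : Type*} [CommRing R] (M : Matrix (Fin 2) (Fin 2) R) :
    M * M = M.trace • M - M.det • 1 := by
  ext i j
  fin_cases i <;> fin_cases j <;> simp [mul_apply, trace_fin_two, det_fin_two] <;> ring

lemma exists_pow_eq_smul_one_add_smul_fin_two {R : Type*} [CommRing R]
    (M : Matrix (Fin 2) (Fin 2) R) (k : ℕ) : ∃ u v : R, M ^ k = u • 1 + v • M := by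
  induction k with
  | zero => exact ⟨1, 0, by simp⟩
  | succ k ih =>
    obtain ⟨u, v, huv⟩ := ih
    refine ⟨-(v * M.det), u + v * M.trace, ?_⟩
    rw [pow_succ, huv, add_mul, smul_mul_assoc, one_mul, smul_mul_assoc, matrix_mul_self_fin_two]
    module

lemma sq_eq_trace_mul_sub_det_of_mulVec_eq_smul {M : Matrix (Fin 2) (Fin 2) K} {v : Fin 2 → K}
    {α : K} (hv : v ≠ 0) (hα : M *ᵥ v = α • v) : α ^ 2 = M.trace * α - M.det := by
  have hsq : (M * M) *ᵥ v = α ^ 2 • v := by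
    rw [← mulVec_mulVec, hα, mulVec_smul, hα, smul_smul, sq]
  rw [matrix_mul_self_fin_two, sub_mulVec, smul_mulVec, smul_mulVec, one_mulVec, hα, smul_smul,
    ← sub_smul] at hsq
  exact (smul_left_injective K hv hsq).symm

lemma matrix_ext_of_mulVec_rep {M N : Matrix (Fin 2) (Fin 2) K} {a b : ℙ¹(K)}
    (hab : a ≠ b) (ha : M *ᵥ a.rep = N *ᵥ a.rep) (hb : M *ᵥ b.rep = N *ᵥ b.rep) : M = N := by
  have hind : LinearIndependent K (Projectivization.rep ∘ ![a, b]) :=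
    independent_iff.1 ((independent_pair_iff_ne a b).2 hab)
  refine Matrix.toLin'.injective (LinearMap.ext_on_range
    (hind.span_eq_top_of_card_eq_finrank' (by simp)) fun i ↦ ?_)
  fin_cases i
  exacts [ha, hb]

end Matrix

namespace PGL2

section Representatives

variable {x y : GL (Fin 2) K} {a b : ℙ¹(K)} {α β γ δ : K}

lemma mk_eq_mk_of_smul_eq (hα : α ≠ 0) (hβ : β ≠ 0) (hxy : α • x.val = β • y.val) :
    (mk x : PGL(2, K)) = mk y := by
  refine mk_eq_mk_iff.2 ⟨Units.mk0 (α / β) (div_ne_zero hα hβ), Units.ext ?_⟩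
  rw [Units.val_mul, GeneralLinearGroup.coe_scalar, Units.val_mk0, scalar_apply,
    ← smul_one_eq_diagonal, mul_smul_comm, mul_one, div_eq_inv_mul, mul_smul, hxy,
    inv_smul_smul₀ hβ]

lemma mk_eq_one_iff : (mk x : PGL(2, K)) = 1 ↔ ∃ μ : K, x.val = μ • 1 := by
  rw [mk_eq_one, GeneralLinearGroup.mem_center_iff_val_mem_range_scalar]
  simp [smul_one_eq_diagonal, eq_comm]

lemma sq_mk_eq_one_of_trace_eq_zero (hx : x.val.trace = 0) : (mk x : PGL(2, K)) ^ 2 = 1 := by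
  rw [← map_pow, mk_eq_one_iff]
  exact ⟨-x.val.det, by rw [Units.val_pow_eq_pow_val, sq, matrix_mul_self_fin_two, hx]; module⟩

lemma trace_eq_zero_of_sq_mk_eq_one (hx : (mk x : PGL(2, K)) ≠ 1)
    (hsq : (mk x : PGL(2, K)) ^ 2 = 1) : x.val.trace = 0 := by
  rw [← map_pow, mk_eq_one_iff, Units.val_pow_eq_pow_val, sq, matrix_mul_self_fin_two] at hsq
  obtain ⟨μ, hμ⟩ := hsq
  by_contra htr
  refine hx (mk_eq_one_iff.2 ⟨x.val.trace⁻¹ * (μ + x.val.det), ?_⟩)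
  rw [mul_smul, add_smul, ← hμ, sub_add_cancel, inv_smul_smul₀ htr]

lemma mk_smul_eq_iff :
    (mk x : PGL(2, K)) • a = b ↔ ∃ α : K, x.val *ᵥ a.rep = α • b.rep := by
  conv_lhs => rw [← a.mk_rep, ← b.mk_rep, PGL.mk_smul_mk, mk_eq_mk_iff']
  exact exists_congr fun _ ↦ eq_comm

lemma mk_eq_one_of_mulVec_rep_eq_smul (hab : a ≠ b) (ha : x.val *ᵥ a.rep = α • a.rep)
    (hb : x.val *ᵥ b.rep = α • b.rep) : (mk x : PGL(2, K)) = 1 :=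
  mk_eq_one_iff.2 ⟨α, matrix_ext_of_mulVec_rep hab
    (by rw [ha, smul_mulVec, one_mulVec]) (by rw [hb, smul_mulVec, one_mulVec])⟩

lemma mk_eq_mk_of_mulVec_rep_eq_smul (hab : a ≠ b) (hα : x.val *ᵥ a.rep = α • a.rep)
    (hβ : x.val *ᵥ b.rep = β • b.rep) (hγ : y.val *ᵥ a.rep = γ • a.rep)
    (hδ : y.val *ᵥ b.rep = δ • b.rep) (h : α * δ = β * γ) : (mk x : PGL(2, K)) = mk y := by
  have ne_zero {z : GL (Fin 2) K} {ε : K} (hε : z.val *ᵥ a.rep = ε • a.rep) : ε ≠ 0 := by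
    rintro rfl
    rw [zero_smul] at hε
    exact a.rep_nonzero ((mulVec_injective_of_isUnit z.isUnit) (hε.trans (mulVec_zero _).symm))
  refine mk_eq_mk_of_smul_eq (ne_zero hγ) (ne_zero hα) (matrix_ext_of_mulVec_rep hab ?_ ?_)
  · rw [smul_mulVec, smul_mulVec, hα, hγ, smul_comm]
  · rw [smul_mulVec, smul_mulVec, hβ, hδ, smul_smul, smul_smul, h, mul_comm]

instance : IsMoebiusAction PGL(2, K) ℙ¹(K) where
  eq_one_of_smul_eq {h a b c} hab hac hbc ha hb hc := by
    obtain ⟨x, rfl⟩ := mk_surjective h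
    obtain ⟨α, hα⟩ := mk_smul_eq_iff.1 ha
    obtain ⟨β, hβ⟩ := mk_smul_eq_iff.1 hb
    obtain ⟨γ, hγ⟩ := mk_smul_eq_iff.1 hc
    -- Three roots of a quadratic polynomial: the left side is their Vandermonde determinant.
    have hprod : (α - β) * (α - γ) * (β - γ) = 0 := by
      linear_combination
        (β - γ) * sq_eq_trace_mul_sub_det_of_mulVec_eq_smul a.rep_nonzero hα
        - (α - γ) * sq_eq_trace_mul_sub_det_of_mulVec_eq_smul b.rep_nonzero hβ
        + (α - β) * sq_eq_trace_mul_sub_det_of_mulVec_eq_smul c.rep_nonzero hγ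
    rw [mul_eq_zero, mul_eq_zero, sub_eq_zero, sub_eq_zero, sub_eq_zero] at hprod
    obtain (rfl | rfl) | rfl := hprod
    · exact mk_eq_one_of_mulVec_rep_eq_smul hab hα hβ
    · exact mk_eq_one_of_mulVec_rep_eq_smul hac hα hγ
    · exact mk_eq_one_of_mulVec_rep_eq_smul hbc hβ hγ
  sq_eq_one_of_swap {h a b} hab ha hb := by
    obtain ⟨x, rfl⟩ := mk_surjective h
    obtain ⟨α, hα⟩ := mk_smul_eq_iff.1 ha
    obtain ⟨β, hβ⟩ := mk_smul_eq_iff.1 hb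
    rw [← map_pow]
    refine mk_eq_one_of_mulVec_rep_eq_smul (α := α * β) hab ?_ ?_
    · rw [Units.val_pow_eq_pow_val, sq, ← mulVec_mulVec, hα, mulVec_smul, hβ, smul_smul]
    · rw [Units.val_pow_eq_pow_val, sq, ← mulVec_mulVec, hβ, mulVec_smul, hα, smul_smul, mul_comm]

end Representatives

section Involutions

variable {c g h t : PGL(2, K)} {a b : ℙ¹(K)}

lemma commute_of_smul_eq (hab : a ≠ b) (hga : g • a = a) (hgb : g • b = b) (hha : h • a = a)
    (hhb : h • b = b) : Commute g h := by
  obtain ⟨x, rfl⟩ := mk_surjective g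
  obtain ⟨y, rfl⟩ := mk_surjective h
  obtain ⟨α, hα⟩ := mk_smul_eq_iff.1 hga
  obtain ⟨β, hβ⟩ := mk_smul_eq_iff.1 hgb
  obtain ⟨γ, hγ⟩ := mk_smul_eq_iff.1 hha
  obtain ⟨δ, hδ⟩ := mk_smul_eq_iff.1 hhb
  refine Commute.map (Units.ext (matrix_ext_of_mulVec_rep hab ?_ ?_)) ProjGenLinGroup.mk
  · rw [Units.val_mul, Units.val_mul, ← mulVec_mulVec, ← mulVec_mulVec, hα, hγ, mulVec_smul,
      mulVec_smul, hα, hγ, smul_comm]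
  · rw [Units.val_mul, Units.val_mul, ← mulVec_mulVec, ← mulVec_mulVec, hβ, hδ, mulVec_smul,
      mulVec_smul, hβ, hδ, smul_comm]

lemma eq_neg_of_mulVec_rep_eq_smul_of_sq_mk_eq_one {x : GL (Fin 2) K} {α β : K} (hab : a ≠ b)
    (hx : (mk x : PGL(2, K)) ≠ 1) (hsq : (mk x : PGL(2, K)) ^ 2 = 1)
    (hα : x.val *ᵥ a.rep = α • a.rep) (hβ : x.val *ᵥ b.rep = β • b.rep) : β = -α := by
  have htr := trace_eq_zero_of_sq_mk_eq_one hx hsq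
  have hαβ : β ^ 2 = α ^ 2 := by
    rw [sq_eq_trace_mul_sub_det_of_mulVec_eq_smul a.rep_nonzero hα,
      sq_eq_trace_mul_sub_det_of_mulVec_eq_smul b.rep_nonzero hβ, htr, zero_mul, zero_mul]
  refine (sq_eq_sq_iff_eq_or_eq_neg.1 hαβ).resolve_left ?_
  rintro rfl
  exact hx (mk_eq_one_of_mulVec_rep_eq_smul hab hα hβ)

lemma eq_of_sq_eq_one_of_smul_eq (hab : a ≠ b) (hg : g ≠ 1) (hgsq : g ^ 2 = 1) (hh : h ≠ 1)
    (hhsq : h ^ 2 = 1) (hga : g • a = a) (hgb : g • b = b) (hha : h • a = a) (hhb : h • b = b) :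
    g = h := by
  obtain ⟨x, rfl⟩ := mk_surjective g
  obtain ⟨y, rfl⟩ := mk_surjective h
  obtain ⟨α, hα⟩ := mk_smul_eq_iff.1 hga
  obtain ⟨β, hβ⟩ := mk_smul_eq_iff.1 hgb
  obtain ⟨γ, hγ⟩ := mk_smul_eq_iff.1 hha
  obtain ⟨δ, hδ⟩ := mk_smul_eq_iff.1 hhb
  obtain rfl := eq_neg_of_mulVec_rep_eq_smul_of_sq_mk_eq_one hab hg hgsq hα hβ
  obtain rfl := eq_neg_of_mulVec_rep_eq_smul_of_sq_mk_eq_one hab hh hhsq hγ hδ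
  exact mk_eq_mk_of_mulVec_rep_eq_smul hab hα hβ hγ hδ (by ring)

lemma det_smul_one_add_smul_ne_zero {x : GL (Fin 2) K}
    (hx : ∀ a : ℙ¹(K), (mk x : PGL(2, K)) • a ≠ a) {u v : K} (huv : u ≠ 0 ∨ v ≠ 0) :
    (u • 1 + v • x.val).det ≠ 0 := by
  intro hdet
  obtain ⟨w, hw, hker⟩ := exists_mulVec_eq_zero_iff.2 hdet
  rw [add_mulVec, smul_mulVec, smul_mulVec, one_mulVec] at hker
  by_cases hv : v = 0
  · rw [hv, zero_smul, add_zero, smul_eq_zero] at hker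
    grind
  · refine hx (Projectivization.mk K w hw) ?_
    rw [PGL.mk_smul_mk, mk_eq_mk_iff']
    refine ⟨-(v⁻¹ * u), ?_⟩
    change _ = x.val *ᵥ w
    rw [neg_smul, mul_smul, eq_neg_of_add_eq_zero_left hker, smul_neg, neg_neg, inv_smul_smul₀ hv]

lemma exists_commute_sq_mul_eq_one (hc : ∀ a : ℙ¹(K), c • a ≠ a) (g : PGL(2, K)) :
    ∃ y, Commute c y ∧ (g * y) ^ 2 = 1 := by
  obtain ⟨x, rfl⟩ := mk_surjective c
  obtain ⟨z, rfl⟩ := mk_surjective g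
  obtain ⟨u, v, huv, htr⟩ : ∃ u v : K, (u ≠ 0 ∨ v ≠ 0) ∧
      u * z.val.trace + v * (z.val * x.val).trace = 0 := by
    by_cases hz : z.val.trace = 0
    · exact ⟨1, 0, by simp [hz]⟩
    · exact ⟨-(z.val * x.val).trace, z.val.trace, .inr hz, by ring⟩
  let y := GeneralLinearGroup.mkOfDetNeZero _ (det_smul_one_add_smul_ne_zero hc huv)
  have hcomm : Commute x y := Commute.units_of_val <|
    ((Commute.one_right _).smul_right u).add_right ((Commute.refl _).smul_right v)
  refine ⟨mk y, hcomm.map ProjGenLinGroup.mk, ?_⟩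
  rw [← map_mul]
  refine sq_mk_eq_one_of_trace_eq_zero ?_
  change (z.val * (u • 1 + v • x.val)).trace = 0
  rw [mul_add, mul_smul_comm, mul_smul_comm, mul_one, trace_add, trace_smul, trace_smul]
  exact htr

lemma sq_mul_eq_one_of_sq_mul_pow_eq_one {k : ℕ} (hck : c ^ k ≠ 1) (ht : t ≠ 1)
    (htsq : t ^ 2 = 1) (htc : t * c ^ k ≠ 1) (htcsq : (t * c ^ k) ^ 2 = 1) :
    (t * c) ^ 2 = 1 := by
  obtain ⟨x, rfl⟩ := mk_surjective c
  obtain ⟨z, rfl⟩ := mk_surjective t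
  rw [← map_pow] at hck
  rw [← map_pow, ← map_mul] at htc htcsq
  obtain ⟨u, v, huv⟩ := exists_pow_eq_smul_one_add_smul_fin_two x.val k
  have hv : v ≠ 0 := by
    rintro rfl
    exact hck (mk_eq_one_iff.2 ⟨u, by simp [huv]⟩)
  have htr := trace_eq_zero_of_sq_mk_eq_one htc htcsq
  rw [Units.val_mul, Units.val_pow_eq_pow_val, huv, mul_add, mul_smul_comm, mul_smul_comm, mul_one,
    trace_add, trace_smul, trace_smul, trace_eq_zero_of_sq_mk_eq_one ht htsq, smul_zero,
    zero_add, smul_eq_zero] at htr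
  rw [← map_mul]
  exact sq_mk_eq_one_of_trace_eq_zero (htr.resolve_left hv)

lemma smul_ne_self_of_mul_mul_inv_eq_inv (hh : h ≠ 1) (ht : t ≠ 1) (htsq : t ^ 2 = 1)
    (hne : h ≠ t) (hconj : t * h * t⁻¹ = h⁻¹) (hab : a ≠ b) (ha : h • a = a) (hb : h • b = b) :
    t • a ≠ a := by
  intro hta
  have htb : t • b = b := by
    by_contra htb
    refine hh (inv_eq_one.1 (IsMoebiusAction.eq_one_of_smul_eq (b := b) (c := t • b) hab ?_
      (Ne.symm htb) ?_ ?_ ?_))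
    · rw [ne_comm, ← hta, (smul_left_cancel_iff t).ne]
      exact hab.symm
    · rw [inv_smul_eq_iff, ha]
    · rw [inv_smul_eq_iff, hb]
    · rw [inv_smul_eq_iff, smul_mem_fixedBy_of_mul_mul_inv_eq_inv hconj hb]
  have hcomm : Commute t h := commute_of_smul_eq hab hta htb ha hb
  rw [hcomm.mul_inv_cancel] at hconj
  have hhsq : h ^ 2 = 1 := by rw [sq, mul_eq_one_iff_eq_inv, ← hconj]
  exact hne (eq_of_sq_eq_one_of_smul_eq hab hh hhsq ht htsq ha hb hta htb)

lemma ncard_fixedBy_add_ncard_fixedBy_inter_of_mul_mul_inv_eq_inv (hh : h ≠ 1) (ht : t ≠ 1)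
    (htsq : t ^ 2 = 1) (hne : h ≠ t) (hconj : t * h * t⁻¹ = h⁻¹) :
    (fixedBy ℙ¹(K) h).ncard
      + (fixedBy ℙ¹(K) h ∩ fixedBy ℙ¹(K) t).ncard =
      if fixedBy ℙ¹(K) h = ∅ then 0 else 2 := by
  have smul_ne {a b : ℙ¹(K)} :=
    smul_ne_self_of_mul_mul_inv_eq_inv (a := a) (b := b) hh ht htsq hne hconj
  obtain hempty | ⟨a, ha⟩ := (fixedBy ℙ¹(K) h).eq_empty_or_nonempty
  · simp [hempty]
  rw [if_neg (Set.Nonempty.ne_empty ⟨a, ha⟩)]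
  by_cases! hb : ∃ b ∈ fixedBy ℙ¹(K) h, a ≠ b
  · obtain ⟨b, hb, hab⟩ := hb
    have hfix := IsMoebiusAction.fixedBy_eq_pair hh hab ha hb
    have hinter : fixedBy ℙ¹(K) h ∩ fixedBy ℙ¹(K) t = ∅ := by
      rw [hfix, Set.eq_empty_iff_forall_notMem]
      rintro c ⟨rfl | rfl, hc⟩
      · exact smul_ne hab ha hb hc
      · exact smul_ne hab.symm hb ha hc
    rw [hinter, hfix, Set.ncard_pair hab, Set.ncard_empty]
  · have hfix : fixedBy ℙ¹(K) h = {a} :=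
      Set.eq_singleton_iff_unique_mem.2 ⟨ha, fun b hb' ↦ (hb b hb').symm⟩
    have hta : t • a = a := (hb _ (smul_mem_fixedBy_of_mul_mul_inv_eq_inv hconj ha)).symm
    rw [Set.inter_eq_left.2 (by rwa [hfix, Set.singleton_subset_iff]), hfix, Set.ncard_singleton]

end Involutions

section Dihedral

open DihedralGroup

lemma ncard_fixedBy_mul_r_add_ncard_fixedBy_inter {n : ℕ}
    {φ : DihedralGroup n →* PGL(2, K)} (hφ : Function.Injective φ) {γ : PGL(2, K)}
    (hγ : γ ∉ φ.range) (i : ZMod n) {j : ZMod n} (hj : (γ * φ (sr j)) ^ 2 = 1) :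
    (fixedBy ℙ¹(K) (γ * φ (r i))).ncard
      + (fixedBy ℙ¹(K) (γ * φ (r i)) ∩ fixedBy ℙ¹(K) (γ * φ (sr j))).ncard =
      if fixedBy ℙ¹(K) (γ * φ (r i)) = ∅ then 0 else 2 := by
  have hmul : γ * φ (sr j) * (γ * φ (r i)) = φ (sr (j + i)) := by
    have hinv : (γ * φ (sr j))⁻¹ = γ * φ (sr j) :=
      inv_eq_of_mul_eq_one_left ((sq _).symm.trans hj)
    rw [← hinv, _root_.mul_inv_rev, ← map_inv, inv_sr, mul_assoc, inv_mul_cancel_left,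
      ← map_mul, sr_mul_r]
  refine ncard_fixedBy_add_ncard_fixedBy_inter_of_mul_mul_inv_eq_inv
    (mul_map_ne_one_of_notMem_range hγ _) (mul_map_ne_one_of_notMem_range hγ _) hj ?_ ?_
  · rw [Ne, mul_right_inj, hφ.eq_iff]
    exact nofun
  · rw [mul_mul_inv_eq_inv_iff_of_sq_eq_one hj, hmul, ← map_pow, sq, sr_mul_self, map_one]

variable [Finite K] {φ : DihedralGroup (Nat.card K + 1) →* PGL(2, K)} {γ : PGL(2, K)}
  {i j : ZMod (Nat.card K + 1)}

lemma three_le_card_add_one (K : Type*) [Field K] [Finite K] : 3 ≤ Nat.card K + 1 := by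
  have := Finite.one_lt_card (α := K)
  lia

lemma card_projectiveLine : Nat.card ℙ¹(K) = Nat.card K + 1 :=
  card_of_finrank_two K _ (by simp)

lemma exists_sq_mul_r_eq_one (hφ : Function.Injective φ) (γ : PGL(2, K)) :
    ∃ i, (γ * φ (r i)) ^ 2 = 1 := by
  obtain ⟨y, hcomm, hsq⟩ := exists_commute_sq_mul_eq_one
    (IsMoebiusAction.r_one_smul_ne hφ card_projectiveLine (three_le_card_add_one K)) γ
  obtain ⟨i, rfl⟩ := IsMoebiusAction.exists_r_eq_of_commute hφ card_projectiveLine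
    (three_le_card_add_one K) hcomm
  exact ⟨i, hsq⟩

lemma mem_range_of_sq_mul_r_one_eq_one (hφ : Function.Injective φ) {t : PGL(2, K)}
    (ht : t ^ 2 = 1) (htr : (t * φ (r 1)) ^ 2 = 1) : t ∈ φ.range := by
  have hconj : t * φ (r 1) * t⁻¹ = (φ (r 1))⁻¹ := (mul_mul_inv_eq_inv_iff_of_sq_eq_one ht).2 htr
  have hsr : φ (r 1) * φ (sr 0) = φ (sr 0) * (φ (r 1))⁻¹ := by
    rw [← map_mul, ← map_inv, ← map_mul, inv_r, sr_mul_r, r_mul_sr, sub_eq_add_neg]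
  have hcomm : Commute (φ (r 1)) (φ (sr 0) * t) := by
    rw [commute_iff_eq, ← mul_assoc, hsr, ← hconj, mul_assoc, inv_mul_cancel_right, mul_assoc]
  obtain ⟨i, hi⟩ := IsMoebiusAction.exists_r_eq_of_commute hφ card_projectiveLine
    (three_le_card_add_one K) hcomm
  rw [← Subgroup.mul_mem_cancel_left _ (MonoidHom.mem_range.2 ⟨sr 0, rfl⟩), ← hi]
  exact ⟨r i, rfl⟩

lemma eq_of_sq_mul_r_eq_one (hφ : Function.Injective φ) (hγ : γ ∉ φ.range)
    (hi : (γ * φ (r i)) ^ 2 = 1) (hj : (γ * φ (r j)) ^ 2 = 1) : i = j := by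
  by_contra hij
  have hpow : φ (r 1) ^ (j - i).val = φ (r (j - i)) := by
    rw [← map_pow, r_one_pow, ZMod.natCast_zmod_val]
  have hmul : γ * φ (r i) * φ (r 1) ^ (j - i).val = γ * φ (r j) := by
    rw [hpow, mul_assoc, ← map_mul, r_mul_r, add_sub_cancel]
  refine hγ ((mul_map_mem_range_iff φ (r i)).1 (mem_range_of_sq_mul_r_one_eq_one hφ hi
    (sq_mul_eq_one_of_sq_mul_pow_eq_one (k := (j - i).val) ?_
      (mul_map_ne_one_of_notMem_range hγ _) hi ?_ ?_)))
  · rw [hpow, ← map_one φ, hφ.ne_iff, one_def, Ne, r.injEq, sub_eq_zero]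
    exact Ne.symm hij
  · exact hmul ▸ mul_map_ne_one_of_notMem_range hγ _
  · rw [hmul, hj]

lemma two_mul_ncard_fixedBy_eq_empty_add (hφ : Function.Injective φ) (hγ : γ ∉ φ.range)
    (hj : (γ * φ (sr j)) ^ 2 = 1) :
    2 * {i | fixedBy ℙ¹(K) (γ * φ (r i)) = ∅}.ncard + (fixedBy ℙ¹(K) (γ * φ (sr j))).ncard =
      Nat.card K + 1 := by
  classical
  have hr := IsMoebiusAction.bijective_r_smul (X := ℙ¹(K)) hφ card_projectiveLine
    (three_le_card_add_one K)
  have hfix : ∑ i, (fixedBy ℙ¹(K) (γ * φ (r i))).ncard = Nat.card K + 1 := by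
    simpa [card_projectiveLine] using sum_ncard_fixedBy_mul_inter hr γ Set.univ
  have hinter := sum_ncard_fixedBy_mul_inter hr γ (fixedBy ℙ¹(K) (γ * φ (sr j)))
  have hpointwise := Finset.sum_congr rfl fun i (_ : i ∈ Finset.univ) ↦
    ncard_fixedBy_mul_r_add_ncard_fixedBy_inter hφ hγ i hj
  have hfree : ∑ i, (if fixedBy ℙ¹(K) (γ * φ (r i)) = ∅ then 0 else 2)
      + 2 * {i | fixedBy ℙ¹(K) (γ * φ (r i)) = ∅}.ncard = 2 * (Nat.card K + 1) := by
    rw [sum_ite_zero_add_mul_ncard, ZMod.card]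
  rw [Finset.sum_add_distrib, hfix, hinter] at hpointwise
  lia

lemma two_mul_ncard_pow_eq_one_and_sq_ne_one_add (hφ : Function.Injective φ) (hγ : γ ∉ φ.range)
    (hi : (γ * φ (r i)) ^ 2 = 1) (hj : (γ * φ (sr j)) ^ 2 = 1) :
    2 * {i | (γ * φ (r i)) ^ (Nat.card K + 1) = 1 ∧ (γ * φ (r i)) ^ 2 ≠ 1}.ncard
      + (if (fixedBy ℙ¹(K) (γ * φ (r i))).ncard = 0 then 2 else 0)
      + (fixedBy ℙ¹(K) (γ * φ (sr j))).ncard = Nat.card K + 1 := by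
  have hset : {k | (γ * φ (r k)) ^ (Nat.card K + 1) = 1 ∧ (γ * φ (r k)) ^ 2 ≠ 1} =
      {k | fixedBy ℙ¹(K) (γ * φ (r k)) = ∅} \ {i} := by
    ext k
    have hk : (γ * φ (r k)) ^ 2 = 1 ↔ k = i :=
      ⟨fun hk ↦ eq_of_sq_mul_r_eq_one hφ hγ hk hi, fun hk ↦ hk ▸ hi⟩
    have hpow := IsMoebiusAction.pow_card_eq_one_and_sq_ne_one_iff ℙ¹(K) (h := γ * φ (r k))
    rw [card_projectiveLine] at hpow
    rw [Set.mem_ofPred_eq, hpow, Ne, hk]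
    rfl
  have hfree := two_mul_ncard_fixedBy_eq_empty_add hφ hγ hj
  rw [hset]
  split_ifs with hzero <;> rw [Set.ncard_eq_zero] at hzero
  · rwa [← Set.ncard_sdiff_singleton_add_one (a := i) hzero, mul_add, mul_one] at hfree
  · rwa [Set.sdiff_singleton_eq_self (a := i) hzero, add_zero]

lemma ncard_pow_eq_one_and_sq_ne_one_add_of_notMem_range (hφ : Function.Injective φ)
    (hγ : γ ∉ φ.range) :
    {d | (γ * φ d) ^ (Nat.card K + 1) = 1 ∧ (γ * φ d) ^ 2 ≠ 1}.ncard
      + (if Even (Nat.card K + 1) then 2 else 1) = Nat.card K + 1 := by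
  have hr (i : ZMod (Nat.card K + 1)) : γ * φ (sr 0) * φ (r i) = γ * φ (sr i) := by
    rw [mul_assoc, ← map_mul, sr_mul_r, zero_add]
  have hsr (i : ZMod (Nat.card K + 1)) : γ * φ (sr 0) * φ (sr i) = γ * φ (r i) := by
    rw [mul_assoc, ← map_mul, sr_mul_sr, sub_zero]
  obtain ⟨i, hi⟩ := exists_sq_mul_r_eq_one hφ γ
  obtain ⟨j, hj⟩ := exists_sq_mul_r_eq_one hφ (γ * φ (sr 0))
  have hcount_sr := two_mul_ncard_pow_eq_one_and_sq_ne_one_add hφ (γ := γ * φ (sr 0))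
    ((mul_map_mem_range_iff φ (sr 0)).not.2 hγ) hj ((hsr i).symm ▸ hi)
  simp only [hr, hsr] at hj hcount_sr
  have hcount_r := two_mul_ncard_pow_eq_one_and_sq_ne_one_add hφ hγ hi hj
  have hi_fix := IsMoebiusAction.ncard_fixedBy_add_ite_of_sq_eq_one ℙ¹(K)
    (mul_map_ne_one_of_notMem_range hγ (r i)) hi
  have hj_fix := IsMoebiusAction.ncard_fixedBy_add_ite_of_sq_eq_one ℙ¹(K)
    (mul_map_ne_one_of_notMem_range hγ (sr j)) hj
  rw [card_projectiveLine] at hi_fix hj_fix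
  rw [ncard_setOf_dihedralGroup]
  lia

lemma ncard_pow_eq_one_and_sq_ne_one_add (hφ : Function.Injective φ) (g : PGL(2, K)) :
    {d | (g * φ d) ^ (Nat.card K + 1) = 1 ∧ (g * φ d) ^ 2 ≠ 1}.ncard
      + (if Even (Nat.card K + 1) then 2 else 1) = Nat.card K + 1 := by
  by_cases hg : g ∈ φ.range
  · exact ncard_pow_eq_one_and_sq_ne_one_add_of_mem_range hφ hg
  · exact ncard_pow_eq_one_and_sq_ne_one_add_of_notMem_range hφ hg

end Dihedral

end PGL2

end PGL2

lemma card_mul_eq_and_mem_range {H G : Type*} [Group H] [Group G] {φ : H →* G}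
    (hφ : Function.Injective φ) (P : G → Prop) (g : G) :
    Nat.card {p : G × G // P p.1 ∧ p.2 ∈ φ.range ∧ p.1 * p.2 = g} = {d | P (g * φ d)}.ncard := by
  rw [← Nat.card_coe_set_eq]
  refine (Nat.card_congr (Equiv.ofBijective
    (fun d ↦ ⟨(g * φ d, (φ d)⁻¹), d.2, inv_mem ⟨d, rfl⟩, mul_inv_cancel_right _ _⟩)
    ⟨fun d d' hdd' ↦ ?_, ?_⟩)).symm
  · exact Subtype.ext (hφ (inv_injective (congrArg (fun p ↦ p.1.2) hdd')))
  · rintro ⟨⟨x, y⟩, hx, ⟨d, hd⟩, hg⟩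
    obtain rfl : φ d = y := hd
    obtain rfl : x * φ d = g := hg
    exact ⟨⟨d⁻¹, by simpa using hx⟩, by simp⟩

/-- Let `q` be a prime power, `K` a finite field with `q` elements, and
`G = PGL(2, K)`.  Let `D` be a subgroup of `G` isomorphic as an abstract group
to the dihedral group of order `2(q+1)`, and let
`A = {g ∈ G : g^(q+1) = 1 ∧ g^2 ≠ 1}`.  Then for every `g ∈ G`, the number of
pairs `(x, d) ∈ A × D` with `x * d = g` equals `q` if `q` is even and `q - 1`
if `q` is odd. -/
theorem pgl2_code_count (q : ℕ) (hq : IsPrimePow q) (K : Type*) [Field K] [Fintype K]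
    (hK : Fintype.card K = q) (D : Subgroup (PGL2 K))
    (hD : Nonempty (D ≃* DihedralGroup (q + 1))) (g : PGL2 K) :
    Nat.card {p : PGL2 K × PGL2 K //
        (p.1 ^ (q + 1) = 1 ∧ p.1 ^ 2 ≠ 1) ∧ p.2 ∈ D ∧ p.1 * p.2 = g} =
      if Even q then q else q - 1 := by
  obtain ⟨e⟩ := hD
  obtain rfl : q = Nat.card K := by rw [← hK, Nat.card_eq_fintype_card]
  let φ : DihedralGroup (Nat.card K + 1) →* PGL2 K := D.subtype.comp e.symm.toMonoidHom
  have hφ : Function.Injective φ := D.subtype_injective.comp e.symm.injective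
  have hrange : φ.range = D := by
    rw [MonoidHom.range_comp, MonoidHom.range_eq_top.2 e.symm.surjective, ← MonoidHom.range_eq_map,
      D.range_subtype]
  have hpairs := card_mul_eq_and_mem_range hφ (fun x ↦ x ^ (Nat.card K + 1) = 1 ∧ x ^ 2 ≠ 1) g
  rw [hrange] at hpairs
  have hcount := (congrArg (· + _) hpairs).trans (PGL2.ncard_pow_eq_one_and_sq_ne_one_add hφ g)
  simp only [Nat.even_add_one] at hcount
  split_ifs at hcount ⊢ <;> lia
end

section
/- For a, b ∈ F, the 𝔽_q-linear map f_{a,b} : F → F, x ↦ a·x + b·x^q, is bijective if and only if a^{q+1} ≠ b^{q+1}. -/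
/-!
For an involutive ring endomorphism `σ`, the map `f_{a,b} : x ↦ a * x + b * σ x` has the adjugate
`f_{σ a, -b}`: composing the two in either order gives multiplication by `a * σ a - b * σ b`, so
`f_{a,b}` is bijective as soon as this element is a unit. If it vanishes and `f_{a,b}` is
surjective, then the adjugate is zero; evaluating it at `1` gives `σ a = b`, and then `σ = id`.
For `|F| = q ^ 2`, the map `x ↦ x ^ q` is an involution of `F` other than the identity.
-/

open Function

section Involution

variable {R : Type*} [CommRing R] {σ : R →+* R}

/-- The linearized binomial `f_{a,b} : x ↦ a * x + b * σ x`, with an arbitrary ring endomorphism `σ`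
in place of the Frobenius map `x ↦ x ^ q`. -/
def linearizedBinomial (σ : R →+* R) (a b x : R) : R :=
  a * x + b * σ x

theorem linearizedBinomial_adjugate_comp (hσ : Involutive σ) (a b : R) :
    linearizedBinomial σ (σ a) (-b) ∘ linearizedBinomial σ a b = ((a * σ a - b * σ b) * ·) := by
  funext x
  simp only [linearizedBinomial, comp_apply, map_add, map_mul, hσ x]
  ring

theorem linearizedBinomial_comp_adjugate (hσ : Involutive σ) (a b : R) :
    linearizedBinomial σ a b ∘ linearizedBinomial σ (σ a) (-b) = ((a * σ a - b * σ b) * ·) := by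
  simpa only [hσ a, neg_neg, map_neg, neg_mul_neg, mul_comm (σ a)] using
    linearizedBinomial_adjugate_comp hσ (σ a) (-b)

theorem bijective_linearizedBinomial_of_isUnit (hσ : Involutive σ) {a b : R}
    (hab : IsUnit (a * σ a - b * σ b)) : Bijective (linearizedBinomial σ a b) := by
  have bijective_mul : Bijective ((a * σ a - b * σ b) * ·) :=
    IsUnit.isUnit_iff_mulLeft_bijective.mp hab
  constructor
  · refine Injective.of_comp (f := linearizedBinomial σ (σ a) (-b)) ?_
    exact linearizedBinomial_adjugate_comp hσ a b ▸ bijective_mul.injective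
  · refine Surjective.of_comp (g := linearizedBinomial σ (σ a) (-b)) ?_
    exact linearizedBinomial_comp_adjugate hσ a b ▸ bijective_mul.surjective

theorem linearizedBinomial_adjugate_eq_zero (hσ : Involutive σ) {a b : R}
    (hab : a * σ a = b * σ b) (hf : Surjective (linearizedBinomial σ a b)) (y : R) :
    linearizedBinomial σ (σ a) (-b) y = 0 := by
  obtain ⟨x, rfl⟩ := hf y
  simpa [hab] using congrFun (linearizedBinomial_adjugate_comp hσ a b) x

theorem mul_map_ne_of_surjective_linearizedBinomial [IsDomain R] (hσ : Involutive σ)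
    (hσ_ne : σ ≠ RingHom.id R) {a b : R} (hf : Surjective (linearizedBinomial σ a b)) :
    a * σ a ≠ b * σ b := by
  intro hab
  have mul_eq (y : R) : σ a * y = b * σ y := by
    simpa [linearizedBinomial, add_neg_eq_zero] using
      linearizedBinomial_adjugate_eq_zero hσ hab hf y
  have map_a : σ a = b := by simpa using mul_eq 1
  have b_ne_zero : b ≠ 0 := by
    rintro rfl
    have a_eq_zero : a = 0 := hσ.injective (map_a.trans (map_zero σ).symm)
    obtain ⟨x, hx⟩ := hf 1
    simp [linearizedBinomial, a_eq_zero] at hx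
  refine hσ_ne (RingHom.ext fun y => mul_left_cancel₀ b_ne_zero ?_)
  rw [← mul_eq, map_a, RingHom.id_apply]

end Involution

theorem f_ab_bijective_iff_general {K : Type*} [Field K] {σ : K →+* K} (hσ : Involutive σ)
    (hσ_ne : σ ≠ RingHom.id K) (a b : K) :
    Bijective (fun x : K => a * x + b * σ x) ↔ a * σ a ≠ b * σ b :=
  ⟨fun hf => mul_map_ne_of_surjective_linearizedBinomial hσ hσ_ne hf.surjective,
    fun hab => bijective_linearizedBinomial_of_isUnit hσ (sub_ne_zero.mpr hab).isUnit⟩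

section FiniteField

variable {F : Type*} [Field F] [Fintype F] {q : ℕ}

theorem exists_ringHom_eq_pow_of_card_eq_pow {n : ℕ} (hq : IsPrimePow q)
    (hF : Fintype.card F = q ^ n) : ∃ σ : F →+* F, ∀ x, σ x = x ^ q := by
  obtain ⟨p, k, hp, -, rfl⟩ := hq
  have : Fact p.Prime := ⟨hp.nat_prime⟩
  have : CharP F p := charP_of_card_eq_prime_pow (hF.trans (pow_mul p k n).symm)
  exact ⟨iterateFrobenius F p k, iterateFrobenius_def p k⟩

theorem exists_pow_ne_self_of_lt_card {n : ℕ} (hn : 1 < n) (hnF : n < Fintype.card F) :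
    ∃ x : F, x ^ n ≠ x := by
  by_contra! pow_eq_self
  have pow_pred_eq_one (u : Fˣ) : u ^ (n - 1) = 1 := by
    rw [← mul_eq_right (b := u), pow_sub_one_mul (by lia)]
    exact Units.ext (pow_eq_self u)
  have card_le : Fintype.card F - 1 ≤ n - 1 :=
    Nat.le_of_dvd (by lia) ((FiniteField.forall_pow_eq_one_iff F (n - 1)).mp pow_pred_eq_one)
  lia

theorem exists_involutive_ringHom_eq_pow (hq : IsPrimePow q) (hF : Fintype.card F = q ^ 2) :
    ∃ σ : F →+* F, Involutive σ ∧ σ ≠ RingHom.id F ∧ ∀ x, σ x = x ^ q := by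
  obtain ⟨σ, σ_eq_pow⟩ := exists_ringHom_eq_pow_of_card_eq_pow hq hF
  refine ⟨σ, fun x => ?_, ?_, σ_eq_pow⟩
  · rw [σ_eq_pow, σ_eq_pow, ← pow_mul, ← sq, ← hF, FiniteField.pow_card]
  · rintro rfl
    have q_lt_card : q < Fintype.card F := hF ▸ lt_self_pow₀ hq.one_lt one_lt_two
    obtain ⟨x, hx⟩ := exists_pow_ne_self_of_lt_card hq.one_lt q_lt_card
    exact hx (σ_eq_pow x).symm

end FiniteField

/-- Let `q` be a prime power and `F` a finite field with `q^2` elements.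
For `a, b ∈ F`, the `𝔽_q`-linear map `f_{a,b} : F → F`, `x ↦ a*x + b*x^q`,
is bijective if and only if `a^(q+1) ≠ b^(q+1)`. -/
theorem f_ab_bijective_iff (q : ℕ) (hq : IsPrimePow q) (F : Type*) [Field F] [Fintype F]
    (hF : Fintype.card F = q ^ 2) (a b : F) :
    Function.Bijective (fun x : F => a * x + b * x ^ q) ↔ a ^ (q + 1) ≠ b ^ (q + 1) := by
  obtain ⟨σ, hσ, hσ_ne, σ_eq_pow⟩ := exists_involutive_ringHom_eq_pow hq hF
  simpa only [σ_eq_pow, ← pow_succ'] using f_ab_bijective_iff_general hσ hσ_ne a b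
end

section
/- Let t ∈ F with t ≠ 0 and t^q ≠ t. Then the conjugacy class of f_{t,0} in GL(V), i.e., the set {h^{-1} ∘ f_{t,0} ∘ h : h ∈ GL(V)}, has exactly q(q−1) elements. -/
/-!
Let `f` be an endomorphism without eigenvalues of a plane `V` over `K`, and let `v ≠ 0`. Then
`g ↦ g v` is a bijection from the conjugates of `f` onto the vectors off the line `K ∙ v`. Indeed
`v` and `g v` form a basis, in which `g` is the companion matrix of the characteristic polynomial
of `f`, so `g` is determined by `g v`. Conversely, if `w` is off the line, the automorphism taking
`(v, f v)` to `(v, w)` conjugates `f` to a map that sends `v` to `w`. Hence `f` has `q ^ 2 - q`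
conjugates when `K` has `q` elements. Multiplication by `t` on `F` has no eigenvalue in the subfield
of `q` elements, because that subfield is exactly the set of solutions of `x ^ q = x`.
-/

open Module Polynomial

section Conjugates

variable {R M : Type*} [CommSemiring R] [AddCommMonoid M] [Module R M] {f g : End R M}

theorem isConj_iff_exists_linearEquiv_conj : IsConj f g ↔ ∃ e : M ≃ₗ[R] M, e.conj f = g := by
  refine (LinearMap.GeneralLinearGroup.generalLinearEquiv R M).toEquiv.exists_congr fun u ↦ ?_
  rw [SemiconjBy, ← Units.mul_inv_eq_iff_eq_mul]
  rfl

theorem image_coe_conjugatesOf (f : End R M) :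
    (fun g : End R M ↦ (g : M → M)) '' conjugatesOf f =
      {g | ∃ h : M → M, (∀ x y, h (x + y) = h x + h y) ∧ (∀ (c : R) x, h (c • x) = c • h x) ∧
        Function.Bijective h ∧ ∀ x, h (g x) = f (h x)} := by
  ext g
  constructor
  · rintro ⟨g, hg, rfl⟩
    obtain ⟨e, rfl⟩ := isConj_iff_exists_linearEquiv_conj.1 (IsConj.symm hg)
    exact ⟨e, map_add e, map_smul e, e.bijective, fun x ↦ by simp [LinearEquiv.conj_apply]⟩
  · rintro ⟨h, hadd, hsmul, hbij, hgf⟩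
    let e : M ≃ₗ[R] M := .ofBijective { toFun := h, map_add' := hadd, map_smul' := hsmul } hbij
    refine ⟨e.symm.conj f, isConj_iff_exists_linearEquiv_conj.2 ⟨e.symm, rfl⟩, ?_⟩
    funext x
    exact e.symm_apply_eq.2 (hgf x).symm

theorem charpoly_eq_of_isConj {R M : Type*} [CommRing R] [AddCommGroup M] [Module R M]
    [Module.Free R M] [Module.Finite R M] {f g : End R M} (h : IsConj f g) :
    f.charpoly = g.charpoly := by
  obtain ⟨e, rfl⟩ := isConj_iff_exists_linearEquiv_conj.1 h
  exact (e.charpoly_conj f).symm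

end Conjugates

section Plane

variable {K V : Type*} [Field K] [AddCommGroup V] [Module K V] {f g : End K V} {u v w : V}

theorem linearIndependent_pair_apply_of_forall_not_hasEigenvalue
    (hf : ∀ c, ¬f.HasEigenvalue c) (hv : v ≠ 0) : LinearIndependent K ![v, f v] :=
  (LinearIndependent.pair_iff' hv).2 fun c hc ↦
    hf c (End.hasEigenvalue_of_hasEigenvector ⟨End.mem_eigenspace_iff.2 hc.symm, hv⟩)

theorem linearIndependent_pair_iff_notMem_span (hv : v ≠ 0) :
    LinearIndependent K ![v, w] ↔ w ∉ K ∙ v := by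
  simp only [LinearIndependent.pair_iff' hv, Submodule.mem_span_singleton, not_exists, ne_eq]

theorem natCard_span_singleton (hv : v ≠ 0) : Nat.card (K ∙ v) = Nat.card K :=
  Nat.card_congr (LinearEquiv.toSpanNonzeroSingleton K V v hv).symm.toEquiv

theorem eq_of_charpoly_eq_of_apply_eq (hV : finrank K V = 2) [FiniteDimensional K V]
    (hfg : f.charpoly = g.charpoly) (hv : LinearIndependent K ![v, f v]) (hfv : f v = g v) :
    f = g := by
  obtain ⟨a, b, hab⟩ := isMonicOfDegree_two_iff.1
    (⟨hV ▸ f.charpoly_natDegree, f.charpoly_monic⟩ : IsMonicOfDegree f.charpoly 2)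
  have cayley_hamilton {φ : End K V} (hφ : φ.charpoly = f.charpoly) :
      φ (φ v) + a • φ v + b • v = 0 := by
    simpa [hφ, hab, pow_two, Algebra.smul_def] using LinearMap.congr_fun φ.aeval_self_charpoly v
  have hffv : f (f v) = g (f v) := by
    have h := (cayley_hamilton rfl).trans (cayley_hamilton hfg.symm).symm
    rw [← hfv] at h
    exact add_right_cancel (add_right_cancel h)
  refine LinearMap.ext_on_range (hv.span_eq_top_of_card_eq_finrank (by simp [hV])) fun i ↦ ?_
  fin_cases i
  exacts [hfv, hffv]

theorem exists_isConj_apply_eq (hV : finrank K V = 2) (hu : LinearIndependent K ![u, f u])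
    (hv : LinearIndependent K ![v, w]) : ∃ g, IsConj f g ∧ g v = w := by
  let b := basisOfLinearIndependentOfCardEqFinrank hu (by simp [hV])
  let b' := basisOfLinearIndependentOfCardEqFinrank hv (by simp [hV])
  let e : V ≃ₗ[K] V := b.equiv b' (Equiv.refl _)
  have heu : e u = v := by simpa [e, b, b'] using b.equiv_apply 0 b' (Equiv.refl _)
  have hefu : e (f u) = w := by simpa [e, b, b'] using b.equiv_apply 1 b' (Equiv.refl _)
  refine ⟨e.conj f, isConj_iff_exists_linearEquiv_conj.2 ⟨e, rfl⟩, ?_⟩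
  rw [LinearEquiv.conj_apply_apply, ← heu, e.symm_apply_apply, hefu]

theorem bijOn_apply_conjugatesOf (hV : finrank K V = 2) (hf : ∀ c, ¬f.HasEigenvalue c)
    (hv : v ≠ 0) : Set.BijOn (fun g : End K V ↦ g v) (conjugatesOf f) (K ∙ v : Set V)ᶜ := by
  have : FiniteDimensional K V := .of_finrank_eq_succ hV
  have hind {g : End K V} (hg : IsConj f g) : LinearIndependent K ![v, g v] := by
    refine linearIndependent_pair_apply_of_forall_not_hasEigenvalue (fun c ↦ ?_) hv
    rw [End.hasEigenvalue_iff_isRoot_charpoly, ← charpoly_eq_of_isConj hg,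
      ← End.hasEigenvalue_iff_isRoot_charpoly]
    exact hf c
  refine ⟨fun g hg ↦ (linearIndependent_pair_iff_notMem_span hv).1 (hind hg), ?_, fun w hw ↦ ?_⟩
  · intro g hg g' hg' hgv
    exact eq_of_charpoly_eq_of_apply_eq hV (charpoly_eq_of_isConj (hg.symm.trans hg')) (hind hg) hgv
  · exact exists_isConj_apply_eq hV (linearIndependent_pair_apply_of_forall_not_hasEigenvalue hf hv)
      ((linearIndependent_pair_iff_notMem_span hv).2 hw)

theorem conjugacy_class_card_general [Finite K] (hV : finrank K V = 2)
    (hf : ∀ c, ¬f.HasEigenvalue c) :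
    (conjugatesOf f).ncard = Nat.card K * (Nat.card K - 1) := by
  have : FiniteDimensional K V := .of_finrank_eq_succ hV
  have : Finite V := Module.finite_of_finite K
  have : Nontrivial V := nontrivial_of_finrank_eq_succ hV
  obtain ⟨v, hv⟩ := exists_ne (0 : V)
  have hbij := bijOn_apply_conjugatesOf hV hf hv
  calc (conjugatesOf f).ncard = ((K ∙ v : Set V)ᶜ).ncard := by
        rw [← hbij.image_eq, hbij.injOn.ncard_image]
    _ = Nat.card V - Nat.card (K ∙ v) := Set.ncard_compl _
    _ = Nat.card K * (Nat.card K - 1) := by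
        rw [natCard_eq_pow_finrank (K := K), hV, natCard_span_singleton hv, Nat.mul_sub_one, sq]

end Plane

section Subfields

theorem not_hasEigenvalue_mulLeft {R A : Type*} [CommRing R] [Ring A] [NoZeroDivisors A]
    [Algebra R A] {a : A} (ha : a ∉ Set.range (algebraMap R A)) (c : R) :
    ¬End.HasEigenvalue (LinearMap.mulLeft R a) c := by
  intro hc
  obtain ⟨x, hx⟩ := hc.exists_hasEigenvector
  refine ha ⟨c, mul_right_cancel₀ hx.2 ?_⟩
  rw [← Algebra.smul_def, ← hx.apply_eq_smul, LinearMap.mulLeft_apply]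

variable {F : Type*} [Field F]

theorem mem_subfield_iff_pow_natCard_eq (K : Subfield F) [Finite K] {x : F} :
    x ∈ K ↔ x ^ Nat.card K = x := by
  constructor
  · intro hx
    have := Fintype.ofFinite K
    rw [Nat.card_eq_fintype_card]
    exact congrArg Subtype.val (FiniteField.pow_card (⟨x, hx⟩ : K))
  · intro hx
    exact splits_X_pow_nat_card_sub_X.mem_subfield_of_isRoot K
      (FiniteField.X_pow_card_sub_X_ne_zero K Finite.one_lt_card) (by simp [hx])

theorem exists_subfield_natCard_eq [Finite F] {q n : ℕ} (hn : n ≠ 0) (hF : Nat.card F = q ^ n) :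
    ∃ K : Subfield F, Nat.card K = q := by
  obtain ⟨p, hp⟩ := CharP.exists F
  have : Fact p.Prime := ⟨CharP.char_is_prime F p⟩
  let := ZMod.algebra F p
  have hcard : p ^ finrank (ZMod p) F = Nat.card F := FiniteField.pow_finrank_eq_natCard p F
  obtain ⟨k, -, rfl⟩ := (Nat.dvd_prime_pow Fact.out).1 (hcard ▸ hF ▸ dvd_pow_self q hn)
  rw [hF, ← pow_mul] at hcard
  have hrank : finrank (ZMod p) F = k * n :=
    Nat.pow_right_injective (Fact.out (p := p.Prime)).two_le hcard
  have hk : k ≠ 0 := by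
    rintro rfl
    exact finrank_pos.ne' (hrank.trans (zero_mul n))
  obtain ⟨φ⟩ := FiniteField.nonempty_algHom_of_finrank_dvd (F := ZMod p) (K := GaloisField p k)
    (L := F) (by rw [GaloisField.finrank p hk, hrank]; exact dvd_mul_right k n)
  refine ⟨(φ : GaloisField p k →+* F).fieldRange, ?_⟩
  rw [← GaloisField.card p k hk]
  exact Nat.card_congr (RingHom.rangeRestrictFieldEquiv _).toEquiv.symm

end Subfields

/-- Let `q` be a prime power and `F` a finite field with `q^2` elements, regarded as a
2-dimensional vector space over the subfield `𝔽_q = {x : x^q = x}`.  Let `t ∈ F` with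
`t ≠ 0` and `t^q ≠ t`.  Then the conjugacy class of `f_{t,0}` in `GL(V)` has exactly
`q(q-1)` elements.  (Here `g` lies in the conjugacy class of `f_{t,0}` iff
`h ∘ g = f_{t,0} ∘ h` for some invertible `𝔽_q`-linear `h`.) -/
theorem conjugacy_class_card (q : ℕ) (hq : IsPrimePow q) (F : Type*) [Field F] [Fintype F]
    (hF : Fintype.card F = q ^ 2) (t : F) (ht : t ≠ 0) (htq : t ^ q ≠ t) :
    Set.ncard {g : F → F | ∃ h : F → F,
        (∀ x y : F, h (x + y) = h x + h y) ∧
        (∀ c x : F, c ^ q = c → h (c * x) = c * h x) ∧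
        Function.Bijective h ∧ ∀ x : F, h (g x) = t * h x} = q * (q - 1) := by
  rw [← Nat.card_eq_fintype_card] at hF
  obtain ⟨K, hK⟩ := exists_subfield_natCard_eq two_ne_zero hF
  have hmem (x : F) : x ∈ K ↔ x ^ q = x := hK ▸ mem_subfield_iff_pow_natCard_eq K
  have hrank : finrank K F = 2 :=
    Nat.pow_right_injective Finite.one_lt_card (natCard_eq_pow_finrank.symm.trans (hK ▸ hF))
  have htK : t ∉ Set.range (algebraMap K F) := by
    rintro ⟨c, rfl⟩
    exact htq ((hmem c).1 c.2)
  have hlin (h : F → F) : (∀ c x : F, c ^ q = c → h (c * x) = c * h x) ↔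
      ∀ (c : K) (x : F), h (c • x) = c • h x :=
    ⟨fun H c x ↦ H c x ((hmem c).1 c.2), fun H c x hc ↦ H ⟨c, (hmem c).2 hc⟩ x⟩
  calc
    _ = ((fun g : End K F ↦ (g : F → F)) '' conjugatesOf (LinearMap.mulLeft K t)).ncard := by
      simp only [image_coe_conjugatesOf, hlin, LinearMap.mulLeft_apply]
    _ = (conjugatesOf (LinearMap.mulLeft K t)).ncard :=
      Set.ncard_image_of_injective _ DFunLike.coe_injective
    _ = q * (q - 1) := by
      rw [conjugacy_class_card_general hrank (not_hasEigenvalue_mulLeft htK), hK]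
end

section
/- Let s, t, r ∈ F with s ≠ 0, s^{q+1} ≠ 1, t ≠ 0, t^{2(q−1)} ≠ 1, and r ≠ 0. If a, b ∈ F are such that f_{a,b} = L_{t,s} ∘ f_{r,0} or f_{a,b} = L_{t,s} ∘ f_{0,r}, then a ≠ 0 and b ≠ 0. -/
/-!
Everything takes place over a field with a multiplicative involution `σ`, which is `x ↦ x ^ q` when
the field has `q ^ 2` elements. As soon as `σ` is not the identity, the map `x ↦ a * x + b * σ x`
determines `a` and `b`, so `a` and `b` are, in some order, the coefficients of `L_{t,s}` times `r`
and `σ r`. The coefficient of `x` in `L_{t,s}` could only vanish if `σ t = t * n` with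
`n = s * σ s` fixed by `σ`; applying `σ` gives `t = σ t * n`, whence `σ t ^ 2 = t ^ 2`.
-/

/-- The map `f_{a,b} : x ↦ a * x + b * σ x`, with a multiplicative endomorphism `σ` in place of
`x ↦ x ^ q`. -/
def binomialMap {R : Type*} [CommSemiring R] (σ : R →* R) (a b x : R) : R :=
  a * x + b * σ x

/-- The map `L_{t,s}`, with `σ` in place of `x ↦ x ^ q`. When `σ` is an involutive ring
endomorphism and `s * σ s ≠ 1`, it is multiplication by `σ t` conjugated by the bijection
`f_{1, -σ s}`. For `s * σ s = 1` it is the junk value `0`. -/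
def conjMulMap {F : Type*} [Field F] (σ : F →* F) (t s : F) : F → F :=
  binomialMap σ ((t * (s * σ s) - σ t) / (s * σ s - 1)) ((t - σ t) * σ s / (s * σ s - 1))

theorem binomialMap_mul {R : Type*} [CommSemiring R] (σ : R →* R) (a b r x : R) :
    binomialMap σ a b (r * x) = binomialMap σ (a * r) (b * σ r) x := by
  simp only [binomialMap, map_mul, mul_assoc]

theorem binomialMap_mul_map {R : Type*} [CommSemiring R] {σ : R →* R}
    (hσ : Function.Involutive σ) (a b r x : R) :
    binomialMap σ a b (r * σ x) = binomialMap σ (b * σ r) (a * r) x := by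
  simp only [binomialMap, map_mul, hσ x, mul_assoc, add_comm]

theorem binomialMap_inj {R : Type*} [CommRing R] [IsDomain R] {σ : R →* R} {c : R}
    (hc : σ c ≠ c) {a b a' b' : R} (h : ∀ x, binomialMap σ a b x = binomialMap σ a' b' x) :
    a = a' ∧ b = b' := by
  have at_one : a + b = a' + b' := by simpa [binomialMap] using h 1
  have at_c : a * c + b * σ c = a' * c + b' * σ c := h c
  have ha : a = a' := mul_right_cancel₀ (sub_ne_zero.mpr hc.symm) <| by
    linear_combination at_c - σ c * at_one
  exact ⟨ha, by simpa [ha] using at_one⟩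

section Involution

variable {M : Type*} [CommMonoid M] {σ : M →* M}

theorem map_mul_map_self (hσ : Function.Involutive σ) (s : M) : σ (s * σ s) = s * σ s := by
  rw [map_mul, hσ s, mul_comm]

theorem map_sq_eq_sq_of_mul_eq_map (hσ : Function.Involutive σ) {t n : M} (hn : σ n = n)
    (h : t * n = σ t) : σ t ^ 2 = t ^ 2 := by
  have h_conj : σ t * n = t := by simpa only [map_mul, hn, hσ t] using congrArg σ h
  calc σ t ^ 2 = (t * n) * σ t := by rw [h, sq]
    _ = t * (σ t * n) := by rw [mul_assoc, mul_comm n]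
    _ = t ^ 2 := by rw [h_conj, sq]

end Involution

theorem coeffs_nonzero_general {F : Type*} [Field F] {σ : F →* F} (hσ : Function.Involutive σ)
    {s t r a b : F} (hs0 : s ≠ 0) (hs : s * σ s ≠ 1) (ht : σ t ^ 2 ≠ t ^ 2) (hr : r ≠ 0)
    (hab : (∀ x, binomialMap σ a b x = conjMulMap σ t s (r * x)) ∨
      (∀ x, binomialMap σ a b x = conjMulMap σ t s (r * σ x))) :
    a ≠ 0 ∧ b ≠ 0 := by
  have ht_map_ne : σ t ≠ t := fun h => ht (by rw [h])
  have hσ_ne_zero {x : F} (hx : x ≠ 0) : σ x ≠ 0 := (hx.isUnit.map σ).ne_zero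
  have hden : s * σ s - 1 ≠ 0 := sub_ne_zero.mpr hs
  have hA : (t * (s * σ s) - σ t) / (s * σ s - 1) ≠ 0 :=
    div_ne_zero (sub_ne_zero.mpr fun h =>
      ht (map_sq_eq_sq_of_mul_eq_map hσ (map_mul_map_self hσ s) h)) hden
  have hB : (t - σ t) * σ s / (s * σ s - 1) ≠ 0 :=
    div_ne_zero (mul_ne_zero (sub_ne_zero.mpr ht_map_ne.symm) (hσ_ne_zero hs0)) hden
  rcases hab with h | h
  · obtain ⟨rfl, rfl⟩ := binomialMap_inj ht_map_ne fun x => (h x).trans (binomialMap_mul ..)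
    exact ⟨mul_ne_zero hA hr, mul_ne_zero hB (hσ_ne_zero hr)⟩
  · obtain ⟨rfl, rfl⟩ := binomialMap_inj ht_map_ne fun x => (h x).trans (binomialMap_mul_map hσ ..)
    exact ⟨mul_ne_zero hB (hσ_ne_zero hr), mul_ne_zero hA hr⟩

theorem involutive_powMonoidHom_of_card_eq_sq {F : Type*} [Field F] [Fintype F] {q : ℕ}
    (hF : Fintype.card F = q ^ 2) : Function.Involutive (powMonoidHom q : F →* F) := fun x => by
  rw [powMonoidHom_apply, powMonoidHom_apply, ← pow_mul, ← sq, ← hF, FiniteField.pow_card]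

theorem pow_mul_sub_one_eq_one_of_pow_pow_eq {G₀ : Type*} [GroupWithZero G₀] {t : G₀} (ht0 : t ≠ 0)
    {q : ℕ} (hq : 0 < q) {k : ℕ} (h : (t ^ q) ^ k = t ^ k) : t ^ (k * (q - 1)) = 1 := by
  rw [Nat.mul_sub_one, pow_sub₀ t ht0 (Nat.le_mul_of_pos_right k hq), mul_comm k, pow_mul, h,
    mul_inv_cancel₀ (pow_ne_zero k ht0)]

/-- Let `q` be a prime power and `F` a finite field with `q^2` elements.
Let `s, t, r ∈ F` with `s ≠ 0`, `s^(q+1) ≠ 1`, `t ≠ 0`, `t^(2(q-1)) ≠ 1`, `r ≠ 0`.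
If `a, b ∈ F` are such that `f_{a,b} = L_{t,s} ∘ f_{r,0}` or
`f_{a,b} = L_{t,s} ∘ f_{0,r}`, then `a ≠ 0` and `b ≠ 0`. -/
theorem coeffs_nonzero (q : ℕ) (hq : IsPrimePow q) (F : Type*) [Field F] [Fintype F]
    (hF : Fintype.card F = q ^ 2) (s t r : F) (hs0 : s ≠ 0) (hs : s ^ (q + 1) ≠ 1)
    (ht0 : t ≠ 0) (ht : t ^ (2 * (q - 1)) ≠ 1) (hr : r ≠ 0) (a b : F)
    (hab :
      (∀ x : F, a * x + b * x ^ q =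
        ((t * s ^ (q + 1) - t ^ q) / (s ^ (q + 1) - 1)) * (r * x) +
        ((t - t ^ q) * s ^ q / (s ^ (q + 1) - 1)) * (r * x) ^ q) ∨
      (∀ x : F, a * x + b * x ^ q =
        ((t * s ^ (q + 1) - t ^ q) / (s ^ (q + 1) - 1)) * (r * x ^ q) +
        ((t - t ^ q) * s ^ q / (s ^ (q + 1) - 1)) * (r * x ^ q) ^ q)) :
    a ≠ 0 ∧ b ≠ 0 := by
  rw [pow_succ'] at hs hab
  exact coeffs_nonzero_general (involutive_powMonoidHom_of_card_eq_sq hF) hs0 hs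
    (fun h => ht (pow_mul_sub_one_eq_one_of_pow_pow_eq ht0 hq.pos h)) hr hab
end

section
/- Let a, b, r ∈ F be nonzero. Then the quadratic equation b·r·X² + (a^q·r − a·r^q)·X − (b·r)^q = 0 has a root in F, and every root of this equation lying in F is nonzero. -/
/-!
Write `c = b * r`, `d = a ^ q * r - a * r ^ q` and `φ x = x ^ q`, an involution of `F`. Substituting
`y = c * s` turns the equation into `y ^ 2 + d * y = c * φ c`, where `φ d = -d` and `c * φ c` is
fixed by `φ`. A solution `y` exists in the algebraic closure. Applying `φ` shows that `φ y` is a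
root of the conjugate quadratic `Y ^ 2 - d * Y = c * φ c`, whose roots are `-y` and `y + d`; in both
cases `φ (φ y) = y`, that is `y ^ q ^ 2 = y`, and so `y` lies in `F`.
-/

open Polynomial

section RingHom

variable {R : Type*} [CommRing R] (φ : R →+* R)

theorem map_mul_sub_mul_map_eq_neg {a r : R} (ha : φ (φ a) = a) (hr : φ (φ r) = r) :
    φ (φ a * r - a * φ r) = -(φ a * r - a * φ r) := by
  rw [map_sub, map_mul, map_mul, ha, hr]
  ring

theorem map_map_eq_self_of_sq_add_mul_eq [NoZeroDivisors R] {d n y : R} (hd : φ d = -d)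
    (hn : φ n = n) (hy : y ^ 2 + d * y = n) : φ (φ y) = y := by
  have conj_root : φ y ^ 2 - d * φ y = n := by
    simpa [hd, hn, ← sub_eq_add_neg] using congrArg φ hy
  have roots_of_conj : (φ y + y) * (φ y - (y + d)) = 0 := by
    linear_combination conj_root - hy
  rcases mul_eq_zero.1 roots_of_conj with h | h
  · rw [eq_neg_of_add_eq_zero_left h, map_neg, eq_neg_of_add_eq_zero_left h, neg_neg]
  · rw [sub_eq_zero.1 h, map_add, sub_eq_zero.1 h, hd, add_neg_cancel_right]

end RingHom

theorem exists_sq_add_mul_eq_of_isAlgClosed {K : Type*} [Field K] [IsAlgClosed K] (d n : K) :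
    ∃ y : K, y ^ 2 + d * y = n := by
  obtain ⟨y, hy⟩ := IsAlgClosed.exists_root (C 1 * X ^ 2 + C d * X + C (-n))
    (by rw [degree_quadratic one_ne_zero]; exact two_ne_zero)
  refine ⟨y, ?_⟩
  simpa [IsRoot, add_neg_eq_zero] using hy

section FiniteField

variable {F : Type*} [Field F] [Fintype F]

theorem mem_range_algebraMap_of_pow_card_eq_self {K : Type*} [CommRing K] [IsDomain K]
    [Algebra F K] {x : K} (hx : x ^ Fintype.card F = x) : x ∈ (algebraMap F K).range := by
  have splits : (X ^ Fintype.card F - X : F[X]).Splits := by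
    simpa using (FiniteField.isSplittingField_sub F F).splits
  exact splits.mem_range_of_isRoot
    (FiniteField.X_pow_card_sub_X_ne_zero F Fintype.one_lt_card) (by simp [hx])

theorem exists_ringHom_eq_pow {q m : ℕ} (hm : m ≠ 0) (hF : Fintype.card F = q ^ m)
    (K : Type*) [CommSemiring K] [Nontrivial K] [Algebra F K] :
    ∃ φ : K →+* K, ∀ x, φ x = x ^ q := by
  obtain ⟨p, _, n, hp, hcard⟩ := FiniteField.card' F
  have : CharP K p := charP_of_injective_algebraMap (algebraMap F K).injective p
  have : ExpChar K p := .prime hp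
  have q_dvd : q ∣ p ^ (n : ℕ) := by
    rw [← hcard, hF]
    exact dvd_pow_self q hm
  obtain ⟨k, -, rfl⟩ := (Nat.dvd_prime_pow hp).1 q_dvd
  exact ⟨iterateFrobenius K p k, fun _ ↦ rfl⟩

variable {q : ℕ}

theorem pow_pow_eq_self_of_card_eq_sq (hF : Fintype.card F = q ^ 2) (x : F) : (x ^ q) ^ q = x := by
  rw [← pow_mul, ← sq, ← hF, FiniteField.pow_card]

theorem exists_sq_add_mul_eq_of_card_eq_sq (hF : Fintype.card F = q ^ 2) {d n : F}
    (hd : d ^ q = -d) (hn : n ^ q = n) : ∃ y : F, y ^ 2 + d * y = n := by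
  let K := AlgebraicClosure F
  obtain ⟨φ, hφ⟩ := exists_ringHom_eq_pow two_ne_zero hF K
  obtain ⟨y, hy⟩ := exists_sq_add_mul_eq_of_isAlgClosed (algebraMap F K d) (algebraMap F K n)
  have y_fixed : φ (φ y) = y :=
    map_map_eq_self_of_sq_add_mul_eq φ (by rw [hφ, ← map_pow, hd, map_neg])
      (by rw [hφ, ← map_pow, hn]) hy
  have y_pow_card : y ^ Fintype.card F = y := by
    rwa [hφ, hφ, ← pow_mul, ← sq, ← hF] at y_fixed
  obtain ⟨z, rfl⟩ := mem_range_algebraMap_of_pow_card_eq_self y_pow_card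
  refine ⟨z, (algebraMap F K).injective ?_⟩
  rw [map_add, map_pow, map_mul, hy]

theorem exists_mul_sq_add_mul_eq_pow_of_card_eq_sq (hF : Fintype.card F = q ^ 2) {c d : F}
    (hc : c ≠ 0) (hd : d ^ q = -d) : ∃ s : F, c * s ^ 2 + d * s = c ^ q := by
  have norm_fixed : (c * c ^ q) ^ q = c * c ^ q := by
    rw [mul_pow, pow_pow_eq_self_of_card_eq_sq hF, mul_comm]
  obtain ⟨y, hy⟩ := exists_sq_add_mul_eq_of_card_eq_sq hF hd norm_fixed
  refine ⟨y / c, mul_left_cancel₀ hc ?_⟩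
  rw [← hy]
  field_simp

theorem pow_mul_sub_mul_pow_pow_eq_neg_of_card_eq_sq (hF : Fintype.card F = q ^ 2)
    (a r : F) : (a ^ q * r - a * r ^ q) ^ q = -(a ^ q * r - a * r ^ q) := by
  obtain ⟨φ, hφ⟩ := exists_ringHom_eq_pow two_ne_zero hF F
  have φ_invol (x : F) : φ (φ x) = x := by
    rw [hφ, hφ, pow_pow_eq_self_of_card_eq_sq hF]
  simpa only [hφ] using map_mul_sub_mul_map_eq_neg φ (φ_invol a) (φ_invol r)

end FiniteField

/-- Let `q` be a prime power and `F` a finite field with `q^2` elements, and let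
`a, b, r ∈ F` be nonzero.  Then the quadratic `b·r·X² + (a^q·r − a·r^q)·X − (b·r)^q = 0`
has a root in `F`, and every root of this equation lying in `F` is nonzero. -/
theorem quadratic_has_root (q : ℕ) (hq : IsPrimePow q) (F : Type*) [Field F] [Fintype F]
    (hF : Fintype.card F = q ^ 2) (a b r : F) (ha : a ≠ 0) (hb : b ≠ 0) (hr : r ≠ 0) :
    (∃ s : F, b * r * s ^ 2 + (a ^ q * r - a * r ^ q) * s - (b * r) ^ q = 0) ∧
    ∀ s : F, b * r * s ^ 2 + (a ^ q * r - a * r ^ q) * s - (b * r) ^ q = 0 → s ≠ 0 := by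
  have hbr : b * r ≠ 0 := mul_ne_zero hb hr
  constructor
  · obtain ⟨s, hs⟩ := exists_mul_sq_add_mul_eq_pow_of_card_eq_sq hF hbr
      (pow_mul_sub_mul_pow_pow_eq_neg_of_card_eq_sq hF a r)
    exact ⟨s, sub_eq_zero.2 hs⟩
  · rintro s hs rfl
    exact pow_ne_zero q hbr (by simpa using hs)
end

section
/- Let s, t, r ∈ F with s ≠ 0, s^{q+1} ≠ 1, t ≠ 0, r ≠ 0, and set a = (t·s^{q+1} − t^q)·r/(s^{q+1} − 1) and b = (t − t^q)·s^q·r^q/(s^{q+1} − 1); assume a ≠ 0 and b ≠ 0. If q is even, then t^{2(q−1)} ≠ 1. If q is odd, then t^{2(q−1)} ≠ 1 if and only if r^{q−1} + a^{q−1} ≠ 0. -/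
/-!
Write `σ x = x ^ q`. The hypothesis `b ≠ 0` forces `σ t ≠ t`, so `t ^ (2 * (q - 1)) = 1`, i.e.
`σ t = ± t`, amounts to `σ t = -t`; in characteristic two this is excluded. With `u = s ^ (q + 1)`,
which is fixed by `σ`, the quotient `a / r = (u * t - σ t) / (u - 1)` is an affine combination of
`t` and its conjugate `σ t` with coefficients fixed by `σ`, so it has the same trace `x + σ x`
as `t`. Hence `σ t = -t` iff `σ (a / r) = -(a / r)`, which is `r ^ (q - 1) + a ^ (q - 1) = 0`.
-/

section MonoidWithZero

variable {M : Type*} [MonoidWithZero M] [IsRightCancelMulZero M] {x c : M} {n : ℕ}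

theorem pow_sub_one_eq_iff_pow_eq_mul (hn : n ≠ 0) (hx : x ≠ 0) :
    x ^ (n - 1) = c ↔ x ^ n = c * x := by
  rw [← pow_sub_one_mul hn, mul_left_inj' hx]

end MonoidWithZero

section IsDomain

variable {R : Type*} [CommRing R] [IsDomain R] {x c r : R} {n : ℕ}

theorem pow_two_mul_sub_one_eq_one_iff (hn : n ≠ 0) (hx : x ≠ 0) :
    x ^ (2 * (n - 1)) = 1 ↔ x ^ n = x ∨ x ^ n = -x := by
  rw [mul_comm, pow_mul, sq_eq_one_iff, pow_sub_one_eq_iff_pow_eq_mul hn hx,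
    pow_sub_one_eq_iff_pow_eq_mul hn hx, one_mul, neg_one_mul]

theorem pow_sub_one_add_mul_pow_sub_one_eq_zero_iff (hn : n ≠ 0) (hr : r ≠ 0) (hc : c ≠ 0) :
    r ^ (n - 1) + (c * r) ^ (n - 1) = 0 ↔ c ^ n = -c := by
  have factor : r ^ (n - 1) + (c * r) ^ (n - 1) = (c ^ (n - 1) + 1) * r ^ (n - 1) := by
    rw [mul_pow]; ring
  rw [factor, mul_eq_zero_iff_right (pow_ne_zero _ hr), add_eq_zero_iff_eq_neg,
    pow_sub_one_eq_iff_pow_eq_mul hn hc, neg_one_mul]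

end IsDomain

theorem map_affine_combination_add_self {R : Type*} [CommRing R] (σ : R →+* R) {l t : R}
    (hl : σ l = l) (ht : σ (σ t) = t) :
    σ (l * t + (1 - l) * σ t) + (l * t + (1 - l) * σ t) = σ t + t := by
  simp only [map_add, map_mul, map_sub, map_one, hl, ht]
  ring

theorem map_sub_div_add_sub_div_eq_map_add {F : Type*} [Field F] (σ : F →+* F) {u t : F}
    (hu : σ u = u) (hu1 : u ≠ 1) (ht : σ (σ t) = t) :
    σ ((t * u - σ t) / (u - 1)) + (t * u - σ t) / (u - 1) = σ t + t := by
  have hu1' : u - 1 ≠ 0 := sub_ne_zero.2 hu1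
  have affine : (t * u - σ t) / (u - 1) = u / (u - 1) * t + (1 - u / (u - 1)) * σ t := by
    field_simp
    ring
  have coeff_fixed : σ (u / (u - 1)) = u / (u - 1) := by
    rw [map_div₀, map_sub, map_one, hu]
  rw [affine, map_affine_combination_add_self σ coeff_fixed ht]

theorem pow_succ_pow_eq_self {M : Type*} [Monoid M] {s : M} {q : ℕ} (hs : s ^ q ^ 2 = s) :
    (s ^ (q + 1)) ^ q = s ^ (q + 1) := by
  rw [← pow_mul, add_mul, one_mul, ← sq, pow_add, hs, pow_succ']

theorem neg_eq_self_of_even_prime_pow {R : Type*} [Ring R] {p k : ℕ} [Fact p.Prime] [CharP R p]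
    (hq : Even (p ^ k)) (x : R) : -x = x := by
  obtain rfl : p = 2 := (Fact.out : p.Prime).even_iff.1 (Nat.even_pow.1 hq).1
  exact CharTwo.neg_eq x

theorem t_in_T_criterion_general {F : Type*} [Field F] {p k : ℕ} [Fact p.Prime] [CharP F p]
    {u t r a : F} (hu : u ^ p ^ k = u) (hu1 : u ≠ 1)
    (ht : t ^ (p ^ k) ^ 2 = t) (htq : t ^ p ^ k ≠ t) (hr : r ≠ 0)
    (hA : a = (t * u - t ^ p ^ k) * r / (u - 1)) (ha : a ≠ 0) :
    (Even (p ^ k) → t ^ (2 * (p ^ k - 1)) ≠ 1) ∧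
    (t ^ (2 * (p ^ k - 1)) ≠ 1 ↔ r ^ (p ^ k - 1) + a ^ (p ^ k - 1) ≠ 0) := by
  have hq0 : p ^ k ≠ 0 := pow_ne_zero k (Fact.out : p.Prime).ne_zero
  have ht0 : t ≠ 0 := by
    rintro rfl
    exact htq (zero_pow hq0)
  have t_pow_eq_one_iff : t ^ (2 * (p ^ k - 1)) = 1 ↔ t ^ p ^ k = -t := by
    rw [pow_two_mul_sub_one_eq_one_iff hq0 ht0, or_iff_right htq]
  set c := (t * u - t ^ p ^ k) / (u - 1) with hc
  have hac : a = c * r := by rw [hA, hc, div_mul_eq_mul_div]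
  have hc0 : c ≠ 0 := left_ne_zero_of_mul (hac ▸ ha)
  have trace_eq : c ^ p ^ k + c = t ^ p ^ k + t :=
    map_sub_div_add_sub_div_eq_map_add (iterateFrobenius F p k) hu hu1
      (by simpa only [iterateFrobenius_def, ← pow_mul, ← sq] using ht)
  refine ⟨fun hq ↦ ?_, not_congr ?_⟩
  · rw [ne_eq, t_pow_eq_one_iff, neg_eq_self_of_even_prime_pow hq]
    exact htq
  · rw [t_pow_eq_one_iff, hac, pow_sub_one_add_mul_pow_sub_one_eq_zero_iff hq0 hr hc0,
      ← add_eq_zero_iff_eq_neg, ← add_eq_zero_iff_eq_neg, trace_eq]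

/-- Let `q` be a prime power and `F` a finite field with `q^2` elements.  Let `s, t, r ∈ F`
with `s ≠ 0`, `s^(q+1) ≠ 1`, `t ≠ 0`, `r ≠ 0`, and set
`a = (t·s^(q+1) − t^q)·r/(s^(q+1) − 1)`, `b = (t − t^q)·s^q·r^q/(s^(q+1) − 1)`; assume
`a ≠ 0` and `b ≠ 0`.  If `q` is even then `t^(2(q−1)) ≠ 1`; if `q` is odd then
`t^(2(q−1)) ≠ 1 ↔ r^(q−1) + a^(q−1) ≠ 0`. -/
theorem t_in_T_criterion (q : ℕ) (hq : IsPrimePow q) (F : Type*) [Field F] [Fintype F]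
    (hF : Fintype.card F = q ^ 2) (s t r : F) (hs0 : s ≠ 0) (hs : s ^ (q + 1) ≠ 1)
    (ht : t ≠ 0) (hr : r ≠ 0) (a b : F)
    (hA : a = (t * s ^ (q + 1) - t ^ q) * r / (s ^ (q + 1) - 1))
    (hB : b = (t - t ^ q) * s ^ q * r ^ q / (s ^ (q + 1) - 1))
    (ha : a ≠ 0) (hb : b ≠ 0) :
    (Even q → t ^ (2 * (q - 1)) ≠ 1) ∧
    (Odd q → (t ^ (2 * (q - 1)) ≠ 1 ↔ r ^ (q - 1) + a ^ (q - 1) ≠ 0)) := by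
  obtain ⟨p, k, hp, -, rfl⟩ := hq
  have : Fact p.Prime := ⟨hp.nat_prime⟩
  have : CharP F p := charP_of_card_eq_prime_pow (hF.trans (pow_mul p k 2).symm)
  have frobenius_sq (x : F) : x ^ (p ^ k) ^ 2 = x := by rw [← hF, FiniteField.pow_card]
  have htq : t ^ p ^ k ≠ t := by
    intro h
    simp [hB, h] at hb
  exact (t_in_T_criterion_general (pow_succ_pow_eq_self (frobenius_sq s)) hs (frobenius_sq t)
    htq hr hA ha).imp_right fun criterion _ ↦ criterion
end

section
/- Suppose q is odd. Let a, b ∈ F be nonzero with a^{q+1} ≠ b^{q+1}, and let R₂ = {r ∈ F : r ≠ 0 and there exists s ∈ F with s^{q+1} ≠ 1 and b·r·s² + (a^q·r − a·r^q)·s − (b·r)^q = 0}. Set κ = 1 − a^{q+1}/b^{q+1} (an element of the subfield 𝔽_q). If there is no z ∈ F with z^q = z and z² = κ, then |R₂| = (q−1)²/2; if there exists z ∈ F with z^q = z, z ≠ 0 and z² = κ, then |R₂| = (q²−1)/2. -/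
/-!
Write `N x = x * x ^ q`. A root `s` of `c X² + w X - c ^ q`, where `w ^ q = -w`, corresponds to
the square root `δ = 2 c s + w` of the discriminant, and `s * (δ ^ q - δ) = 2 c ^ q (N s - 1)`.
As the discriminant lies in `𝔽_q`, we have `δ ^ q = ± δ`, so `r` belongs to `R₂` exactly when the
discriminant `D r` is a nonsquare of `𝔽_q`, that is, `D r ^ ((q - 1) / 2) = -1`.

Put `u = a ^ q * r` and choose `z ∈ F` with `z² = κ`. Then `D r = N (b / a) * X * Y`, where
`X, Y = (u + u ^ q) ± z (u - u ^ q)`.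

* If `z ∈ 𝔽_q`, then `Y = X ^ q`, so `D r = N (b / a * X)` is a nonsquare of `𝔽_q` if and only if
  `b / a * X` is a nonsquare of `F`; here `r ↦ X` is a bijection of `F`.
* Otherwise `z ^ q = -z` and `r ↦ (X, Y)` is a bijection onto `𝔽_q × 𝔽_q`, where a nonzero
  value of `X` may be combined with an arbitrary nonsquare value of `D r`.
-/

open Function

section Powers

variable {F : Type*} [Field F]

theorem ne_zero_of_pow_eq_neg_one [NeZero (2 : F)] {n : ℕ} {x : F} (hx : x ^ n = -1) : x ≠ 0 := by
  have htwo : (2 : F) ≠ 0 := two_ne_zero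
  rintro rfl
  rcases eq_or_ne n 0 with rfl | hn
  · exact htwo (by linear_combination hx)
  · simp [hn] at hx

theorem ne_zero_of_pow_eq_one {n : ℕ} (hn : n ≠ 0) {x : F} (hx : x ^ n = 1) : x ≠ 0 := by
  rintro rfl
  simp [hn] at hx

theorem pow_succ_eq_self_iff {n : ℕ} {x : F} (hx : x ≠ 0) : x ^ (n + 1) = x ↔ x ^ n = 1 := by
  rw [pow_succ, mul_eq_right₀ hx]

theorem pow_two_mul_add_one_eq_neg_iff {n : ℕ} {x : F} (hx : x ≠ 0) :
    x ^ (2 * n + 1) = -x ↔ (x ^ 2) ^ n = -1 := by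
  rw [pow_succ, pow_mul, neg_eq_neg_one_mul, mul_left_inj' hx]

theorem pow_two_mul_add_one_eq_self_of_pow_eq_neg_one {n : ℕ} {x : F} (hx : x ^ n = -1) :
    x ^ (2 * n + 1) = x := by
  rw [pow_succ, mul_comm 2, pow_mul, hx, neg_one_sq, one_mul]

end Powers

section Involution

variable {F : Type*} [Field F] {σ : F →+* F}

theorem map_ne_self_iff_of_map_sq_eq [NeZero (2 : F)] {x : F} (hx : σ (x ^ 2) = x ^ 2) :
    σ x ≠ x ↔ σ x = -x ∧ x ≠ 0 := by
  have hsign : σ x = x ∨ σ x = -x := sq_eq_sq_iff_eq_or_eq_neg.mp (by rw [← map_pow, hx])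
  refine ⟨fun hne ↦ ⟨hsign.resolve_left hne, ?_⟩, fun ⟨hneg, h0⟩ heq ↦ ?_⟩
  · rintro rfl
    exact hne (map_zero σ)
  · have : 2 * x = 0 := by linear_combination hneg - heq
    exact mul_ne_zero two_ne_zero h0 this

theorem map_discrim_of_skew (hσ : Involutive σ) {c w : F} (hw : σ w = -w) :
    σ (discrim c w (-σ c)) = discrim c w (-σ c) := by
  simp only [discrim, map_sub, map_mul, map_pow, map_neg, map_ofNat, hw, hσ c]
  ring

theorem mul_map_ne_one_iff_of_root [NeZero (2 : F)] (hσ : Involutive σ) {c w s : F} (hc : c ≠ 0)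
    (hw : σ w = -w) (hs : c * (s * s) + w * s + -σ c = 0) :
    s * σ s ≠ 1 ↔ σ (2 * c * s + w) = -(2 * c * s + w) ∧ 2 * c * s + w ≠ 0 := by
  have hσc : σ c ≠ 0 := (map_ne_zero σ).mpr hc
  have hs0 : s ≠ 0 := by
    rintro rfl
    simp [hc] at hs
  have hdelta : s * (σ (2 * c * s + w) - (2 * c * s + w)) = 2 * σ c * (s * σ s - 1) := by
    simp only [map_add, map_mul, map_ofNat, hw]
    linear_combination -2 * hs
  have hfixed : σ ((2 * c * s + w) ^ 2) = (2 * c * s + w) ^ 2 := by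
    rw [← discrim_eq_sq_of_quadratic_eq_zero hs, map_discrim_of_skew hσ hw]
  rw [← map_ne_self_iff_of_map_sq_eq hfixed, not_iff_not, ← sub_eq_zero,
    ← mul_eq_zero_iff_left (mul_ne_zero two_ne_zero hσc), ← hdelta, mul_eq_zero_iff_left hs0,
    sub_eq_zero]

theorem exists_root_mul_map_ne_one_iff [NeZero (2 : F)] (hσ : Involutive σ) {c w : F}
    (hc : c ≠ 0) (hw : σ w = -w) :
    (∃ s, s * σ s ≠ 1 ∧ c * (s * s) + w * s + -σ c = 0) ↔
      ∃ δ, σ δ = -δ ∧ δ ≠ 0 ∧ δ ^ 2 = discrim c w (-σ c) := by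
  constructor
  · rintro ⟨s, hs1, hs⟩
    obtain ⟨hskew, h0⟩ := (mul_map_ne_one_iff_of_root hσ hc hw hs).mp hs1
    exact ⟨_, hskew, h0, (discrim_eq_sq_of_quadratic_eq_zero hs).symm⟩
  · rintro ⟨δ, hskew, h0, hδ⟩
    have hlift : 2 * c * ((δ - w) / (2 * c)) + w = δ := by
      field_simp
      ring
    have hs : c * ((δ - w) / (2 * c) * ((δ - w) / (2 * c))) + w * ((δ - w) / (2 * c)) + -σ c = 0 :=
      (quadratic_eq_zero_iff_discrim_eq_sq hc _).mpr (by rw [hlift, hδ])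
    refine ⟨_, (mul_map_ne_one_iff_of_root hσ hc hw hs).mpr ?_, hs⟩
    rw [hlift]
    exact ⟨hskew, h0⟩

/-- The linear form `t + z * w` in the coordinates `t = u + σ u` and `w = u - σ u`; the forms for
`z` and `-z` are the two factors of `t ^ 2 - z ^ 2 * w ^ 2`. -/
def linearFactor (σ : F →+* F) (z u : F) : F :=
  u + σ u + z * (u - σ u)

theorem map_linearFactor (hσ : Involutive σ) (z u : F) :
    σ (linearFactor σ z u) = linearFactor σ (-σ z) u := by
  simp only [linearFactor, map_add, map_sub, map_mul, hσ u]
  ring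

theorem linearFactor_prod_injective [NeZero (2 : F)] {z : F} (hz : z ≠ 0) :
    Injective fun u ↦ (linearFactor σ z u, linearFactor σ (-z) u) := by
  have hleft : LeftInverse (fun p : F × F ↦ ((p.1 + p.2) + (p.1 - p.2) / z) / (2 * 2))
      fun u ↦ (linearFactor σ z u, linearFactor σ (-z) u) := by
    intro u
    simp only [linearFactor]
    field_simp
    ring
  exact hleft.injective

theorem linearFactor_injective [NeZero (2 : F)] (hσ : Involutive σ) {z : F} (hz : z ≠ 0)
    (hσz : σ z = z) : Injective (linearFactor σ z) := by
  intro u v huv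
  have huv' : linearFactor σ (-z) u = linearFactor σ (-z) v := by
    simpa only [map_linearFactor hσ, hσz] using congrArg σ huv
  exact linearFactor_prod_injective hz (Prod.ext huv huv')

theorem range_linearFactor_prod [NeZero (2 : F)] (hσ : Involutive σ) {z : F} (hz : z ≠ 0)
    (hσz : σ z = -z) :
    Set.range (fun u ↦ (linearFactor σ z u, linearFactor σ (-z) u)) =
      {p | σ p.1 = p.1 ∧ σ p.2 = p.2} := by
  ext ⟨x, y⟩
  constructor
  · rintro ⟨u, hu⟩
    obtain ⟨rfl, rfl⟩ := Prod.mk.inj hu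
    simp only [Set.mem_ofPred_eq, map_linearFactor hσ, map_neg, hσz, neg_neg, and_self]
  · rintro ⟨hx : σ x = x, hy : σ y = y⟩
    refine ⟨((x + y) + (x - y) / z) / (2 * 2), Prod.ext ?_ ?_⟩
    all_goals
      simp only [linearFactor, map_add, map_sub, map_div₀, map_mul, map_ofNat, hx, hy, hσz]
      field_simp
      ring

theorem map_one_sub_mul_map_div (hσ : Involutive σ) (a b : F) :
    σ (1 - a * σ a / (b * σ b)) = 1 - a * σ a / (b * σ b) := by
  rw [map_sub, map_one, map_div₀, map_mul, map_mul, hσ, hσ, mul_comm (σ a), mul_comm (σ b)]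

/-- The set `R₂` of all `r ≠ 0` whose associated quadratic polynomial has a root `s` of norm
`s ^ (q + 1) ≠ 1`. -/
def R2 (q : ℕ) (a b : F) : Set F :=
  {r | r ≠ 0 ∧ ∃ s, s ^ (q + 1) ≠ 1 ∧
    b * r * s ^ 2 + (a ^ q * r - a * r ^ q) * s - (b * r) ^ q = 0}

/-- The discriminant of the quadratic polynomial defining `R₂`, with `σ` in the role of
`x ↦ x ^ q`. -/
def rootDiscrim (σ : F →+* F) (a b r : F) : F :=
  discrim (b * r) (σ a * r - a * σ r) (-σ (b * r))

theorem rootDiscrim_eq_mul_linearFactor (hσ : Involutive σ) {a b z : F} (ha : a ≠ 0) (hb : b ≠ 0)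
    (hz : z ^ 2 = 1 - a * σ a / (b * σ b)) (r : F) :
    rootDiscrim σ a b r = b / a * σ (b / a) *
      (linearFactor σ z (σ a * r) * linearFactor σ (-z) (σ a * r)) := by
  have hσa : σ a ≠ 0 := (map_ne_zero σ).mpr ha
  have hσb : σ b ≠ 0 := (map_ne_zero σ).mpr hb
  field_simp at hz
  simp only [rootDiscrim, discrim, linearFactor, map_mul, map_div₀, hσ a]
  field_simp
  linear_combination (r * σ a - a * σ r) ^ 2 * hz

end Involution

section FiniteField

variable {F : Type*} [Field F] [Fintype F]

theorem exists_ringHom_apply_eq_pow {q k : ℕ} (hq : IsPrimePow q)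
    (hF : Fintype.card F = q ^ k) : ∃ σ : F →+* F, ∀ x, σ x = x ^ q := by
  obtain ⟨p, n, hp, -, rfl⟩ := hq
  have : Fact p.Prime := ⟨hp.nat_prime⟩
  have : CharP F p := charP_of_card_eq_prime_pow (hF.trans (pow_mul p n k).symm)
  exact ⟨iterateFrobenius F p n, iterateFrobenius_def p n⟩

theorem involutive_of_apply_eq_pow {q : ℕ} (hF : Fintype.card F = q ^ 2) {σ : F → F}
    (hσ : ∀ x, σ x = x ^ q) : Involutive σ := fun x ↦ by
  rw [hσ, hσ, ← pow_mul, ← sq, ← hF, FiniteField.pow_card]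

theorem ringChar_ne_two_of_odd_card (hF : Odd (Fintype.card F)) : ringChar F ≠ 2 :=
  fun h2 ↦ Nat.not_even_iff_odd.mpr hF
    (Nat.even_iff.mpr (FiniteField.even_card_of_char_two h2))

theorem neZero_two_of_odd_card (hF : Odd (Fintype.card F)) : NeZero (2 : F) :=
  ⟨Ring.two_ne_zero (ringChar_ne_two_of_odd_card hF)⟩

theorem ne_zero_of_dvd_card_sub_one {n : ℕ} (hn : n ∣ Fintype.card F - 1) : n ≠ 0 :=
  ne_zero_of_dvd_ne_zero (Nat.sub_ne_zero_of_lt Fintype.one_lt_card) hn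

theorem odd_card_of_two_dvd_card_sub_one (h2 : 2 ∣ Fintype.card F - 1) :
    Odd (Fintype.card F) := by
  rw [← Nat.sub_add_cancel (Fintype.card_pos (α := F))]
  exact (even_iff_two_dvd.mpr h2).add_one

theorem ncard_pow_eq_one {n : ℕ} (hn : n ∣ Fintype.card F - 1) :
    {x : F | x ^ n = 1}.ncard = n := by
  have hn0 : n ≠ 0 := ne_zero_of_dvd_card_sub_one hn
  have himage : {x : F | x ^ n = 1} =
      Set.image Units.val ((powMonoidHom n : Fˣ →* Fˣ).ker : Set Fˣ) := by
    ext x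
    refine ⟨fun hx ↦ ⟨Units.ofPowEqOne x n hx hn0, Units.pow_ofPowEqOne hx hn0, rfl⟩, ?_⟩
    rintro ⟨u, hu, rfl⟩
    exact congrArg Units.val hu
  rw [himage, Set.ncard_image_of_injective _ Units.val_injective, ← Nat.card_coe_set_eq,
    SetLike.coe_sort_coe, IsCyclic.card_powMonoidHom_ker, Nat.card_units,
    Nat.card_eq_fintype_card, Nat.gcd_eq_right hn]

theorem ncard_pow_eq_neg_one {n : ℕ} (hn : 2 * n ∣ Fintype.card F - 1) :
    {x : F | x ^ n = -1}.ncard = n := by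
  have hchar := ringChar_ne_two_of_odd_card
    (odd_card_of_two_dvd_card_sub_one (dvd_of_mul_right_dvd hn))
  have hunion : {x : F | x ^ (2 * n) = 1} = {x | x ^ n = 1} ∪ {x | x ^ n = -1} := by
    ext x
    rw [Set.mem_ofPred_eq, mul_comm, pow_mul, sq_eq_one_iff]
    rfl
  have hdisj : Disjoint {x : F | x ^ n = 1} {x | x ^ n = -1} :=
    Set.disjoint_left.mpr fun x h1 hneg ↦
      Ring.neg_one_ne_one_of_char_ne_two hchar (hneg.symm.trans h1)
  have hcard := Set.ncard_union_eq hdisj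
  rw [← hunion, ncard_pow_eq_one hn, ncard_pow_eq_one ((Dvd.intro_left 2 rfl).trans hn)] at hcard
  omega

theorem ncard_fixed_pairs_mul_pow_eq_neg_one {n : ℕ} (hn : 2 * n ∣ Fintype.card F - 1)
    {c : F} (hc0 : c ≠ 0) (hc : c ^ (2 * n + 1) = c) :
    {p : F × F | (p.1 ^ (2 * n + 1) = p.1 ∧ p.2 ^ (2 * n + 1) = p.2) ∧
      (c * (p.1 * p.2)) ^ n = -1}.ncard = 2 * n * n := by
  have : NeZero (2 : F) := neZero_two_of_odd_card
    (odd_card_of_two_dvd_card_sub_one (dvd_of_mul_right_dvd hn))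
  have hbij : Set.BijOn (fun p : F × F ↦ (p.1, c * (p.1 * p.2)))
      {p : F × F | (p.1 ^ (2 * n + 1) = p.1 ∧ p.2 ^ (2 * n + 1) = p.2) ∧
        (c * (p.1 * p.2)) ^ n = -1}
      ({x | x ^ (2 * n) = 1} ×ˢ {d | d ^ n = -1}) := by
    refine ⟨?_, ?_, ?_⟩
    · rintro ⟨x, y⟩ ⟨⟨hx, -⟩, hd⟩
      have hx0 : x ≠ 0 := left_ne_zero_of_mul (right_ne_zero_of_mul (ne_zero_of_pow_eq_neg_one hd))
      exact ⟨(pow_succ_eq_self_iff hx0).mp hx, hd⟩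
    · rintro ⟨x, y⟩ ⟨-, hd⟩ ⟨x₂, y₂⟩ - heq
      obtain ⟨rfl, heq⟩ := Prod.mk.inj heq
      have hx0 : x ≠ 0 := left_ne_zero_of_mul (right_ne_zero_of_mul (ne_zero_of_pow_eq_neg_one hd))
      exact Prod.ext rfl (mul_left_cancel₀ hx0 (mul_left_cancel₀ hc0 heq))
    · rintro ⟨x, d⟩ ⟨hx : x ^ (2 * n) = 1, hd : d ^ n = -1⟩
      have hx0 : x ≠ 0 := ne_zero_of_pow_eq_one (ne_zero_of_dvd_card_sub_one hn) hx
      have hxfix := (pow_succ_eq_self_iff hx0).mpr hx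
      have hdfix := pow_two_mul_add_one_eq_self_of_pow_eq_neg_one hd
      have hmul : c * (x * (d / (c * x))) = d := by field_simp
      refine ⟨(x, d / (c * x)), ⟨⟨hxfix, ?_⟩, ?_⟩, Prod.ext rfl hmul⟩
      · rw [div_pow, mul_pow, hc, hxfix, hdfix]
      · rw [hmul, hd]
  rw [hbij.ncard_eq, Set.ncard_prod, ncard_pow_eq_one hn, ncard_pow_eq_neg_one hn]

end FiniteField

section QuadraticExtension

variable {F : Type*} [Field F] [Fintype F] {h : ℕ}

theorem two_mul_add_one_sq (n : ℕ) : (2 * n + 1) ^ 2 = 2 * (2 * n * (n + 1)) + 1 := by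
  ring

theorem isSquare_of_pow_eq_self (hF : Fintype.card F = (2 * h + 1) ^ 2) {x : F}
    (hx : x ^ (2 * h + 1) = x) : IsSquare x := by
  have hcard := hF.trans (two_mul_add_one_sq h)
  rcases eq_or_ne x 0 with rfl | hx0
  · exact IsSquare.zero
  · rw [FiniteField.isSquare_iff (ringChar_ne_two_of_odd_card ⟨_, hcard⟩) hx0,
      show Fintype.card F / 2 = 2 * h * (h + 1) by omega, pow_mul,
      (pow_succ_eq_self_iff hx0).mp hx, one_pow]

theorem exists_skew_sqrt_of_not_exists_fixed_sqrt (hF : Fintype.card F = (2 * h + 1) ^ 2)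
    {σ : F →+* F} (hσ : ∀ x, σ x = x ^ (2 * h + 1)) {x : F} (hx : σ x = x)
    (hnonsq : ¬∃ z, σ z = z ∧ z ^ 2 = x) : ∃ z, σ z = -z ∧ z ≠ 0 ∧ z ^ 2 = x := by
  have : NeZero (2 : F) := neZero_two_of_odd_card ⟨_, hF.trans (two_mul_add_one_sq h)⟩
  obtain ⟨z, rfl⟩ := (isSquare_of_pow_eq_self hF ((hσ x).symm.trans hx)).exists_sq
  obtain ⟨hskew, hz0⟩ := (map_ne_self_iff_of_map_sq_eq hx).mp fun hz ↦ hnonsq ⟨z, hz, rfl⟩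
  exact ⟨z, hskew, hz0, rfl⟩

theorem exists_skew_sqrt_iff_pow_eq_neg_one (hF : Fintype.card F = (2 * h + 1) ^ 2) {d : F} :
    (∃ δ, δ ^ (2 * h + 1) = -δ ∧ δ ≠ 0 ∧ δ ^ 2 = d) ↔ d ^ h = -1 := by
  constructor
  · rintro ⟨δ, hskew, h0, rfl⟩
    exact (pow_two_mul_add_one_eq_neg_iff h0).mp hskew
  · intro hd
    have : NeZero (2 : F) := neZero_two_of_odd_card ⟨_, hF.trans (two_mul_add_one_sq h)⟩
    obtain ⟨δ, rfl⟩ := (isSquare_of_pow_eq_self hF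
      (pow_two_mul_add_one_eq_self_of_pow_eq_neg_one hd)).exists_sq
    have h0 : δ ≠ 0 := pow_ne_zero_iff two_ne_zero |>.mp (ne_zero_of_pow_eq_neg_one hd)
    exact ⟨δ, (pow_two_mul_add_one_eq_neg_iff h0).mpr hd, h0, rfl⟩

variable {σ : F →+* F}

theorem R2_eq_setOf_rootDiscrim_pow_eq_neg_one (hF : Fintype.card F = (2 * h + 1) ^ 2)
    (hσ : ∀ x, σ x = x ^ (2 * h + 1)) (a : F) {b : F} (hb : b ≠ 0) :
    R2 (2 * h + 1) a b = {r | rootDiscrim σ a b r ^ h = -1} := by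
  have : NeZero (2 : F) := neZero_two_of_odd_card ⟨_, hF.trans (two_mul_add_one_sq h)⟩
  have hinv := involutive_of_apply_eq_pow hF hσ
  ext r
  rcases eq_or_ne r 0 with rfl | hr
  · have hdiscr : rootDiscrim σ a b 0 = 0 := by simp [rootDiscrim, discrim]
    exact iff_of_false (fun hr ↦ hr.1 rfl) fun hpow ↦ ne_zero_of_pow_eq_neg_one hpow hdiscr
  · have hskew : σ (σ a * r - a * σ r) = -(σ a * r - a * σ r) := by
      simp only [map_sub, map_mul, hinv a, hinv r]
      ring
    have hroot := exists_root_mul_map_ne_one_iff hinv (mul_ne_zero hb hr) hskew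
    simp only [hσ, ← pow_succ', ← sq, ← sub_eq_add_neg] at hroot
    simp only [R2, rootDiscrim, Set.mem_ofPred_eq, hr, ne_eq, not_false_eq_true, true_and, hσ,
      ← exists_skew_sqrt_iff_pow_eq_neg_one hF]
    exact hroot

theorem ncard_rootDiscrim_pow_eq_neg_one_of_fixed (hF : Fintype.card F = (2 * h + 1) ^ 2)
    (hσ : ∀ x, σ x = x ^ (2 * h + 1)) {a b z : F} (ha : a ≠ 0) (hb : b ≠ 0) (hz0 : z ≠ 0)
    (hσz : σ z = z) (hz : z ^ 2 = 1 - a * σ a / (b * σ b)) :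
    {r | rootDiscrim σ a b r ^ h = -1}.ncard = 2 * h * (h + 1) := by
  have hcard := hF.trans (two_mul_add_one_sq h)
  have : NeZero (2 : F) := neZero_two_of_odd_card ⟨_, hcard⟩
  have hinv := involutive_of_apply_eq_pow hF hσ
  have hinj : Injective fun r ↦ b / a * linearFactor σ z (σ a * r) :=
    (mul_right_injective₀ (div_ne_zero hb ha)).comp
      ((linearFactor_injective hinv hz0 hσz).comp
        (mul_right_injective₀ ((map_ne_zero σ).mpr ha)))
  have hnorm (r : F) : rootDiscrim σ a b r ^ h =
      (b / a * linearFactor σ z (σ a * r)) ^ (2 * h * (h + 1)) := by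
    have hexp : 2 * h * (h + 1) = (2 * h + 1 + 1) * h := by ring
    rw [rootDiscrim_eq_mul_linearFactor hinv ha hb hz, hexp, pow_mul, pow_succ _ (2 * h + 1), ← hσ,
      map_mul, map_linearFactor hinv, hσz]
    ring
  have hpreimage : {r | rootDiscrim σ a b r ^ h = -1} =
      (fun r ↦ b / a * linearFactor σ z (σ a * r)) ⁻¹' {x | x ^ (2 * h * (h + 1)) = -1} := by
    simp only [hnorm, Set.preimage_ofPred_eq]
  rw [hpreimage, Set.ncard_preimage_of_injective_subset_range hinj
    (by simp [(Finite.surjective_of_injective hinj).range_eq]),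
    ncard_pow_eq_neg_one (by simp [hcard])]

theorem ncard_rootDiscrim_pow_eq_neg_one_of_skew (hF : Fintype.card F = (2 * h + 1) ^ 2)
    (hσ : ∀ x, σ x = x ^ (2 * h + 1)) {a b z : F} (ha : a ≠ 0) (hb : b ≠ 0) (hz0 : z ≠ 0)
    (hσz : σ z = -z) (hz : z ^ 2 = 1 - a * σ a / (b * σ b)) :
    {r | rootDiscrim σ a b r ^ h = -1}.ncard = 2 * h * h := by
  have hcard := hF.trans (two_mul_add_one_sq h)
  have : NeZero (2 : F) := neZero_two_of_odd_card ⟨_, hcard⟩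
  have hinv := involutive_of_apply_eq_pow hF hσ
  have hσa : σ a ≠ 0 := (map_ne_zero σ).mpr ha
  have hba : b / a ≠ 0 := div_ne_zero hb ha
  have hnorm_fixed : (b / a * σ (b / a)) ^ (2 * h + 1) = b / a * σ (b / a) := by
    rw [← hσ, map_mul, hinv, mul_comm]
  let pair : F → F × F := fun u ↦ (linearFactor σ z u, linearFactor σ (-z) u)
  have hinj : Injective fun r ↦ pair (σ a * r) :=
    (linearFactor_prod_injective hz0).comp (mul_right_injective₀ hσa)
  have hrange : Set.range (fun r ↦ pair (σ a * r)) = {p | σ p.1 = p.1 ∧ σ p.2 = p.2} := by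
    rw [← range_linearFactor_prod hinv hz0 hσz]
    exact (mul_left_surjective₀ hσa).range_comp pair
  have hpreimage : {r | rootDiscrim σ a b r ^ h = -1} = (fun r ↦ pair (σ a * r)) ⁻¹'
      {p | (σ p.1 = p.1 ∧ σ p.2 = p.2) ∧ (b / a * σ (b / a) * (p.1 * p.2)) ^ h = -1} := by
    ext r
    have hfixed : pair (σ a * r) ∈ {p | σ p.1 = p.1 ∧ σ p.2 = p.2} := hrange ▸ ⟨r, rfl⟩
    rw [Set.mem_ofPred_eq, rootDiscrim_eq_mul_linearFactor hinv ha hb hz]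
    exact (and_iff_right hfixed).symm
  rw [hpreimage, Set.ncard_preimage_of_injective_subset_range hinj
    (hrange ▸ Set.sep_subset _ _)]
  simp only [hσ] at hnorm_fixed ⊢
  exact ncard_fixed_pairs_mul_pow_eq_neg_one ⟨2 * (h + 1), by rw [hcard]; grind⟩
    (mul_ne_zero hba (pow_ne_zero _ hba)) hnorm_fixed

end QuadraticExtension



/-- Let `q` be an odd prime power and `F` a finite field with `q^2` elements.  Let
`a, b ∈ F` be nonzero with `a^(q+1) ≠ b^(q+1)`, and let
`R₂ = {r ≠ 0 : b·r·X² + (a^q·r − a·r^q)·X − (b·r)^q = 0 has a root s with s^(q+1) ≠ 1}`.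
Set `κ = 1 − a^(q+1)/b^(q+1)`.  If `κ` is a nonsquare in `𝔽_q` then
`|R₂| = (q−1)²/2`; if `κ` is a nonzero square in `𝔽_q` then `|R₂| = (q²−1)/2`. -/
theorem card_R2_odd (q : ℕ) (hq : IsPrimePow q) (hodd : Odd q)
    (F : Type*) [Field F] [Fintype F] (hF : Fintype.card F = q ^ 2)
    (a b : F) (ha : a ≠ 0) (hb : b ≠ 0) (hab : a ^ (q + 1) ≠ b ^ (q + 1)) :
    ((¬∃ z : F, z ^ q = z ∧ z ^ 2 = 1 - a ^ (q + 1) / b ^ (q + 1)) →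
      Set.ncard {r : F | r ≠ 0 ∧ ∃ s : F, s ^ (q + 1) ≠ 1 ∧
          b * r * s ^ 2 + (a ^ q * r - a * r ^ q) * s - (b * r) ^ q = 0} =
        (q - 1) ^ 2 / 2) ∧
    ((∃ z : F, z ^ q = z ∧ z ≠ 0 ∧ z ^ 2 = 1 - a ^ (q + 1) / b ^ (q + 1)) →
      Set.ncard {r : F | r ≠ 0 ∧ ∃ s : F, s ^ (q + 1) ≠ 1 ∧
          b * r * s ^ 2 + (a ^ q * r - a * r ^ q) * s - (b * r) ^ q = 0} =
        (q ^ 2 - 1) / 2) := by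
  obtain ⟨h, rfl⟩ := hodd
  obtain ⟨σ, hσ⟩ := exists_ringHom_apply_eq_pow hq hF
  have hκ := map_one_sub_mul_map_div (involutive_of_apply_eq_pow hF hσ) a b
  have hnorm (x : F) : x ^ (2 * h + 1 + 1) = x * σ x := by rw [hσ, pow_succ']
  change (_ → (R2 (2 * h + 1) a b).ncard = _) ∧ (_ → (R2 (2 * h + 1) a b).ncard = _)
  rw [R2_eq_setOf_rootDiscrim_pow_eq_neg_one hF hσ a hb, hnorm a, hnorm b]
  simp only [← hσ]
  constructor
  · intro hnonsq
    obtain ⟨z, hσz, hz0, hz⟩ := exists_skew_sqrt_of_not_exists_fixed_sqrt hF hσ hκ hnonsq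
    have hhalf : (2 * h + 1 - 1) ^ 2 / 2 = 2 * h * h :=
      Nat.div_eq_of_eq_mul_right two_pos (by rw [Nat.add_sub_cancel]; ring)
    rw [ncard_rootDiscrim_pow_eq_neg_one_of_skew hF hσ ha hb hz0 hσz hz, hhalf]
  · rintro ⟨z, hσz, hz0, hz⟩
    have hhalf : ((2 * h + 1) ^ 2 - 1) / 2 = 2 * h * (h + 1) := by
      rw [two_mul_add_one_sq, Nat.add_sub_cancel, Nat.mul_div_cancel_left _ two_pos]
    rw [ncard_rootDiscrim_pow_eq_neg_one_of_fixed hF hσ ha hb hz0 hσz hz, hhalf]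
end

section
/- Suppose q is even. Let a, b ∈ F be nonzero with a^{q+1} ≠ b^{q+1}, and let R₂ = {r ∈ F : r ≠ 0 and there exists s ∈ F with s^{q+1} ≠ 1 and b·r·s² + (a^q·r − a·r^q)·s − (b·r)^q = 0}. Then |R₂| = q(q−1)/2. -/
/-!
Write `σ x = x ^ q` and let `K = 𝔽_q` be its fixed field. If `σ a * r ∈ K`, the linear coefficient
of the quadratic vanishes and every root `s` satisfies `σ s * s = 1`. The remaining `r` are uniquely
of the form `c * (z + x) / σ a` with `c ∈ Kˣ` and `x ∈ K`, where `z` is fixed with `σ z = z + 1`.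
Rescaling `s` turns the quadratic into `t ^ 2 + t = k * ((z + x) ^ 2 + (z + x))`, where
`k = b ^ (q + 1) / a ^ (q + 1)`, and `σ s * s ≠ 1` becomes `t ∈ K`. The values of `t ^ 2 + t` on `K`
form a subgroup of index two, which multiplication by `k ∉ {0, 1}` does not preserve; hence exactly
half of all `x ∈ K` are admissible, whatever `c` is.
-/

section IndexTwo

theorem two_mul_ncard_add_map_mem_of_index_eq_two {G A : Type*} [AddGroup G] [Finite G]
    [AddGroup A] {H : AddSubgroup A} (hH : H.index = 2) (f : G →+ A) {g₀ : G} (hg₀ : f g₀ ∉ H)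
    (y : A) : 2 * {g | y + f g ∈ H}.ncard = Nat.card G := by
  have hcompl : {g | y + f g ∈ H}ᶜ = (Equiv.addRight g₀).symm '' {g | y + f g ∈ H} := by
    ext g
    simp only [Set.mem_compl_iff, Set.mem_ofPred_eq, Equiv.image_symm_eq_preimage,
      Set.mem_preimage, Equiv.coe_addRight, map_add, ← add_assoc,
      AddSubgroup.add_mem_iff_of_index_two hH (b := f g₀), hg₀, iff_false]
  rw [← Set.ncard_add_ncard_compl {g | y + f g ∈ H}, hcompl,
    Set.ncard_image_of_injective _ (Equiv.injective _), two_mul]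

theorem exists_mem_mul_notMem_of_index_eq_two {K : Type*} [DivisionRing K] {H : AddSubgroup K}
    (hH : H.index = 2) {k : K} (hk₀ : k ≠ 0) (hk₁ : k ≠ 1) : ∃ x ∈ H, k * x ∉ H := by
  by_contra! hstable
  have hcomap_index : (H.comap (AddMonoidHom.mulLeft k)).index = 2 :=
    (H.index_comap_of_surjective (mulLeft_bijective₀ k hk₀).surjective).trans hH
  have hcomap_le : H.comap (AddMonoidHom.mulLeft k) ≤ H := by
    have hmul := AddSubgroup.relIndex_mul_index (H := H) (K := H.comap (AddMonoidHom.mulLeft k))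
      hstable
    rw [hcomap_index, hH] at hmul
    exact AddSubgroup.relIndex_eq_one.1 (by omega)
  have hmul_mem (y : K) : k * y ∈ H ↔ y ∈ H := ⟨fun hy => hcomap_le hy, hstable y⟩
  have hsub_mem (y : K) : (k - 1) * y ∈ H := by
    rw [sub_one_mul, sub_eq_add_neg, AddSubgroup.add_mem_iff_of_index_two hH, neg_mem_iff]
    exact hmul_mem y
  have htop : H = ⊤ := (AddSubgroup.eq_top_iff' H).2 fun x => by
    simpa [mul_inv_cancel_left₀ (sub_ne_zero.2 hk₁)] using hsub_mem ((k - 1)⁻¹ * x)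
  simp [htop] at hH

end IndexTwo

section ArtinSchreier

/-- The Artin–Schreier map `x ↦ x ^ p - x` of a commutative ring of exponential
characteristic `p`, as an additive homomorphism. -/
def artinSchreier (K : Type*) [CommRing K] (p : ℕ) [ExpChar K p] : K →+ K :=
  (frobenius K p).toAddMonoidHom - AddMonoidHom.id K

theorem artinSchreier_apply {K : Type*} [CommRing K] (p : ℕ) [ExpChar K p] (x : K) :
    artinSchreier K p x = x ^ p - x := rfl

theorem artinSchreier_two_apply {K : Type*} [CommRing K] [CharP K 2] (x : K) :
    artinSchreier K 2 x = x ^ 2 + x := by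
  rw [artinSchreier_apply, CharTwo.sub_eq_add]

theorem card_ker_artinSchreier (K : Type*) [Field K] (p : ℕ) [Fact p.Prime] [CharP K p] :
    Nat.card (artinSchreier K p).ker = p := by
  have hker : (artinSchreier K p).ker = (⊥ : Subfield K).toAddSubgroup := by
    ext x
    rw [AddMonoidHom.mem_ker, artinSchreier_apply, sub_eq_zero]
    exact (Subfield.mem_bot_iff_pow_eq_self K p).symm
  rw [hker]
  exact Subfield.card_bot K p

theorem index_range_artinSchreier (K : Type*) [Field K] [Finite K] (p : ℕ) [Fact p.Prime]
    [CharP K p] : (artinSchreier K p).range.index = p := by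
  have hrange := (artinSchreier K p).range.card_mul_index
  have hker := (artinSchreier K p).ker.index_mul_card
  rw [AddSubgroup.index_ker, card_ker_artinSchreier] at hker
  exact Nat.eq_of_mul_eq_mul_left Nat.card_pos (hrange.trans hker.symm)

theorem two_mul_ncard_exists_sq_add_self_eq {K : Type*} [Field K] [Finite K] [CharP K 2] {k : K}
    (hk₀ : k ≠ 0) (hk₁ : k ≠ 1) (y : K) :
    2 * {x : K | ∃ t, t ^ 2 + t = y + k * (x ^ 2 + x)}.ncard = Nat.card K := by
  have hindex := index_range_artinSchreier K 2
  obtain ⟨_, ⟨x₀, rfl⟩, hx₀⟩ := exists_mem_mul_notMem_of_index_eq_two hindex hk₀ hk₁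
  simpa [artinSchreier_two_apply] using two_mul_ncard_add_map_mem_of_index_eq_two hindex
    ((AddMonoidHom.mulLeft k).comp (artinSchreier K 2)) hx₀ y

theorem eq_or_eq_add_one_of_sq_add_self_eq {R : Type*} [CommRing R] [NoZeroDivisors R] [CharP R 2]
    {x y : R} (h : x ^ 2 + x = y ^ 2 + y) : x = y ∨ x = y + 1 := by
  have hfactor : (x - y) * (x - (y + 1)) = 0 := by
    linear_combination h - (x * y - y ^ 2 - y + x) * CharTwo.two_eq_zero (R := R)
  simpa only [mul_eq_zero, sub_eq_zero] using hfactor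

end ArtinSchreier

section FixedSubfield

variable {F : Type*} [Field F] {σ : F →+* F}

/-- The subfield of elements fixed by `σ`; it is `𝔽_q` when `F` has `q ^ 2` elements and
`σ x = x ^ q`. -/
abbrev fixedSubfield (σ : F →+* F) : Subfield F := σ.eqLocusField (RingHom.id F)

theorem mem_fixedSubfield {x : F} : x ∈ fixedSubfield σ ↔ σ x = x := Iff.rfl

theorem map_mul_self_mem_fixedSubfield (hσ : Function.Involutive σ) (x : F) :
    σ x * x ∈ fixedSubfield σ := by
  rw [mem_fixedSubfield, map_mul, hσ, mul_comm]

theorem map_add_self_mem_fixedSubfield (hσ : Function.Involutive σ) (x : F) :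
    σ x + x ∈ fixedSubfield σ := by
  rw [mem_fixedSubfield, map_add, hσ, add_comm]

/-- The map `(c, x) ↦ c * (z + x)` on `Kˣ × K`, where `K` is the fixed field of `σ`. For an
involution `σ` of a field of characteristic two and `σ z = z + 1`, it parametrizes the complement
of `K`. -/
def unitsMulAdd (σ : F →+* F) (z : F) (p : (fixedSubfield σ)ˣ × fixedSubfield σ) : F :=
  p.1 * (z + p.2)

theorem map_unitsMulAdd {z : F} (hz : σ z = z + 1) (p : (fixedSubfield σ)ˣ × fixedSubfield σ) :
    σ (unitsMulAdd σ z p) = unitsMulAdd σ z p + p.1 := by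
  have hc : σ p.1 = p.1 := p.1.1.2
  have hx : σ p.2 = p.2 := p.2.2
  rw [unitsMulAdd, map_mul, map_add, hz, hc, hx]
  ring

theorem unitsMulAdd_injective {z : F} (hz : σ z = z + 1) :
    Function.Injective (unitsMulAdd σ z) := by
  rintro ⟨c, x⟩ ⟨c', x'⟩ h
  obtain rfl : c = c' := by
    have hmap := congrArg σ h
    rw [map_unitsMulAdd hz, map_unitsMulAdd hz, h, add_right_inj] at hmap
    exact Units.ext (Subtype.ext hmap)
  have hx : z + (x : F) = z + x' :=
    mul_left_cancel₀ (Subtype.coe_injective.ne c.ne_zero) h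
  rw [Subtype.ext (add_left_cancel hx)]

variable [CharP F 2]

theorem exists_map_eq_add_one (hσ : Function.Involutive σ) (hne : ∃ x, σ x ≠ x) :
    ∃ z, σ z = z + 1 := by
  obtain ⟨x, hx⟩ := hne
  have htrace : σ x + x ≠ 0 := mt CharTwo.add_eq_zero.1 hx
  refine ⟨x / (σ x + x), ?_⟩
  rw [map_div₀, map_add_self_mem_fixedSubfield hσ x, RingHom.id_apply, div_add_one htrace,
    add_left_comm, CharTwo.add_self_eq_zero, add_zero]

theorem sq_add_self_mem_fixedSubfield {z : F} (hz : σ z = z + 1) :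
    z ^ 2 + z ∈ fixedSubfield σ := by
  rw [mem_fixedSubfield, map_add, map_pow, hz]
  linear_combination (z + 1) * CharTwo.two_eq_zero (R := F)

theorem range_unitsMulAdd (hσ : Function.Involutive σ) {z : F} (hz : σ z = z + 1) :
    Set.range (unitsMulAdd σ z) = (fixedSubfield σ : Set F)ᶜ := by
  ext w
  refine ⟨?_, fun hw => ?_⟩
  · rintro ⟨p, rfl⟩ (hmem : σ _ = _)
    rw [map_unitsMulAdd hz, RingHom.id_apply, add_eq_left] at hmem
    exact p.1.ne_zero (Subtype.ext hmem)
  · have hc : σ w + w ≠ 0 := mt CharTwo.add_eq_zero.1 hw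
    have hx : w / (σ w + w) + z ∈ fixedSubfield σ := by
      rw [mem_fixedSubfield, map_add, map_div₀, map_add_self_mem_fixedSubfield hσ w, hz,
        RingHom.id_apply]
      field_simp
      linear_combination σ w * CharTwo.two_eq_zero (R := F)
    refine ⟨(Units.mk0 ⟨σ w + w, map_add_self_mem_fixedSubfield hσ w⟩
      (Subtype.coe_ne_coe.1 hc), ⟨_, hx⟩), ?_⟩
    rw [unitsMulAdd, Units.val_mk0, add_comm z, add_assoc, CharTwo.add_self_eq_zero, add_zero,
      mul_div_cancel₀ _ hc]

theorem card_eq_card_fixedSubfield_sq [Finite F] (hσ : Function.Involutive σ)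
    (hne : ∃ x, σ x ≠ x) : Nat.card F = Nat.card (fixedSubfield σ) ^ 2 := by
  obtain ⟨z, hz⟩ := exists_map_eq_add_one hσ hne
  have hcompl : (fixedSubfield σ : Set F)ᶜ.ncard =
      (Nat.card (fixedSubfield σ) - 1) * Nat.card (fixedSubfield σ) := by
    rw [← range_unitsMulAdd hσ hz, ← Nat.card_coe_set_eq,
      Nat.card_range_of_injective (unitsMulAdd_injective hz), Nat.card_prod, Nat.card_units]
  have hpos : 1 ≤ Nat.card (fixedSubfield σ) := Nat.card_pos
  calc Nat.card F
      = Nat.card (fixedSubfield σ) +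
          (Nat.card (fixedSubfield σ) - 1) * Nat.card (fixedSubfield σ) := by
        rw [← Set.ncard_add_ncard_compl (fixedSubfield σ : Set F), hcompl]
        rfl
    _ = Nat.card (fixedSubfield σ) ^ 2 := by
        rw [← one_add_mul, Nat.add_sub_cancel' hpos, sq]

end FixedSubfield

section NonUnitaryRoot

variable {F : Type*} [Field F] {σ : F →+* F} {a b c z t : F}

/-- The quadratic `b r X² + (σ(a) r - a σ(r)) X - σ(b r)` has a root `s` with `σ(s) s ≠ 1`.
With `σ x = x ^ q` the nonzero `r` with this property form the set `R₂`. -/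
def HasNonUnitaryRoot (σ : F →+* F) (a b r : F) : Prop :=
  ∃ s : F, σ s * s ≠ 1 ∧ b * r * s ^ 2 + (σ a * r - a * σ r) * s - σ (b * r) = 0

theorem map_mul_self_eq_one_iff_map_eq_add_one (hσ : Function.Involutive σ) (ha : a ≠ 0)
    (hb : b ≠ 0) (hz : σ z = z + 1) (hz₀ : z ≠ 0)
    (ht : t ^ 2 + t = σ b * b / (σ a * a) * (z ^ 2 + z)) :
    σ (σ a * t / (b * z)) * (σ a * t / (b * z)) = 1 ↔ σ t = t + 1 := by
  have hσa : σ a ≠ 0 := (map_ne_zero σ).2 ha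
  have hσb : σ b ≠ 0 := (map_ne_zero σ).2 hb
  have hz₁ : z + 1 ≠ 0 := hz ▸ (map_ne_zero σ).2 hz₀
  have hnorm : σ (σ a * t / (b * z)) * (σ a * t / (b * z)) = σ t * t / (t ^ 2 + t) := by
    rw [ht]
    simp only [map_mul, map_div₀, hσ a, hz]
    field_simp
  have hfactor : t ^ 2 + t = (t + 1) * t := by ring
  have ht₀ : (t + 1) * t ≠ 0 := by
    rw [← hfactor, ht, sq, ← add_one_mul]
    simp [ha, hb, hz₀, hz₁]
  rw [hnorm, hfactor, div_eq_one_iff_eq ht₀, mul_left_inj' (right_ne_zero_of_mul ht₀)]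

variable [CharP F 2]

theorem not_hasNonUnitaryRoot_of_mem_fixedSubfield (hσ : Function.Involutive σ) (hb : b ≠ 0)
    {r : F} (hr : r ≠ 0) (hmem : σ a * r ∈ fixedSubfield σ) : ¬ HasNonUnitaryRoot σ a b r := by
  rintro ⟨s, hs, hroot⟩
  rw [mem_fixedSubfield, map_mul, hσ] at hmem
  have hsq : b * r * s ^ 2 = σ (b * r) := by linear_combination hroot + s * hmem
  have hsq_conj : σ (b * r) * σ s ^ 2 = b * r := by
    rw [← map_pow, ← map_mul, hsq, hσ]
  have hnorm_sq : (σ s * s) ^ 2 = 1 ^ 2 := by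
    refine mul_left_cancel₀ (mul_ne_zero hb hr) ?_
    linear_combination σ s ^ 2 * hsq + hsq_conj
  exact hs (CharTwo.sq_inj.1 hnorm_sq)

theorem quadratic_eq_zero_iff_sq_add_self_eq (hσ : Function.Involutive σ) (ha : a ≠ 0)
    (hb : b ≠ 0) (hc : σ c = c) (hc₀ : c ≠ 0) (hz : σ z = z + 1) (hz₀ : z ≠ 0) :
    b * (c * z / σ a) * (σ a * t / (b * z)) ^ 2 +
        (σ a * (c * z / σ a) - a * σ (c * z / σ a)) * (σ a * t / (b * z)) -
        σ (b * (c * z / σ a)) = 0 ↔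
      t ^ 2 + t = σ b * b / (σ a * a) * (z ^ 2 + z) := by
  have hfactor : b * (c * z / σ a) * (σ a * t / (b * z)) ^ 2 +
        (σ a * (c * z / σ a) - a * σ (c * z / σ a)) * (σ a * t / (b * z)) -
        σ (b * (c * z / σ a)) =
      c * σ a / (b * z) * (t ^ 2 + t - σ b * b / (σ a * a) * (z ^ 2 + z)) := by
    have hσa : σ a ≠ 0 := (map_ne_zero σ).2 ha
    simp only [map_mul, map_div₀, hσ a, hc, hz]
    field_simp
    linear_combination -t * σ a * a * CharTwo.two_eq_zero (R := F)
  have hscale : c * σ a / (b * z) ≠ 0 := by simp [ha, hb, hc₀, hz₀]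
  rw [hfactor, mul_eq_zero_iff_left hscale, sub_eq_zero]

theorem hasNonUnitaryRoot_iff_exists_sq_add_self_eq (hσ : Function.Involutive σ) (ha : a ≠ 0)
    (hb : b ≠ 0) (hc : σ c = c) (hc₀ : c ≠ 0) (hz : σ z = z + 1) :
    HasNonUnitaryRoot σ a b (c * z / σ a) ↔
      ∃ t ∈ fixedSubfield σ, t ^ 2 + t = σ b * b / (σ a * a) * (z ^ 2 + z) := by
  have hσa : σ a ≠ 0 := (map_ne_zero σ).2 ha
  have hz₀ : z ≠ 0 := by
    rintro rfl
    simp at hz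
  constructor
  · rintro ⟨s, hs, hroot⟩
    obtain ⟨t, rfl⟩ : ∃ t, s = σ a * t / (b * z) := ⟨b * z * s / σ a, by field_simp⟩
    have ht := (quadratic_eq_zero_iff_sq_add_self_eq hσ ha hb hc hc₀ hz hz₀).1 hroot
    have hconj : σ t ^ 2 + σ t = t ^ 2 + t := by
      rw [← map_pow, ← map_add, ht]
      exact mul_mem (div_mem (map_mul_self_mem_fixedSubfield hσ b)
        (map_mul_self_mem_fixedSubfield hσ a)) (sq_add_self_mem_fixedSubfield hz)
    refine ⟨t, (eq_or_eq_add_one_of_sq_add_self_eq hconj).resolve_right fun h => hs ?_, ht⟩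
    exact (map_mul_self_eq_one_iff_map_eq_add_one hσ ha hb hz hz₀ ht).2 h
  · rintro ⟨t, hfix, ht⟩
    refine ⟨σ a * t / (b * z), ?_,
      (quadratic_eq_zero_iff_sq_add_self_eq hσ ha hb hc hc₀ hz hz₀).2 ht⟩
    rw [Ne, map_mul_self_eq_one_iff_map_eq_add_one hσ ha hb hz hz₀ ht, mem_fixedSubfield.1 hfix]
    simp

theorem hasNonUnitaryRoot_unitsMulAdd_iff (hσ : Function.Involutive σ) (ha : a ≠ 0) (hb : b ≠ 0)
    (hz : σ z = z + 1) {k y : fixedSubfield σ} (hk : (k : F) = σ b * b / (σ a * a))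
    (hy : (y : F) = z ^ 2 + z) (p : (fixedSubfield σ)ˣ × fixedSubfield σ) :
    HasNonUnitaryRoot σ a b (unitsMulAdd σ z p / σ a) ↔
      ∃ t : fixedSubfield σ, t ^ 2 + t = k * y + k * (p.2 ^ 2 + p.2) := by
  have hzx : σ (z + p.2) = z + p.2 + 1 := by
    rw [map_add, hz, mem_fixedSubfield.1 p.2.2, add_right_comm]
  have hsum : (z + p.2) ^ 2 + (z + p.2) = y + (p.2 ^ 2 + p.2 : F) := by
    rw [CharTwo.add_sq, hy, add_add_add_comm]
  rw [unitsMulAdd, hasNonUnitaryRoot_iff_exists_sq_add_self_eq hσ ha hb p.1.1.2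
    (Subtype.coe_injective.ne p.1.ne_zero) hzx, hsum, ← hk, mul_add]
  exact ⟨fun ⟨t, ht, h⟩ => ⟨⟨t, ht⟩, Subtype.ext h⟩,
    fun ⟨t, h⟩ => ⟨t, t.2, congrArg Subtype.val h⟩⟩

theorem setOf_hasNonUnitaryRoot_eq_image (hσ : Function.Involutive σ) (ha : a ≠ 0) (hb : b ≠ 0)
    (hz : σ z = z + 1) {k y : fixedSubfield σ} (hk : (k : F) = σ b * b / (σ a * a))
    (hy : (y : F) = z ^ 2 + z) :
    {r | r ≠ 0 ∧ HasNonUnitaryRoot σ a b r} = (unitsMulAdd σ z · / σ a) ''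
      Set.univ ×ˢ {x | ∃ t, t ^ 2 + t = k * y + k * (x ^ 2 + x)} := by
  have hσa : σ a ≠ 0 := (map_ne_zero σ).2 ha
  have hiff := hasNonUnitaryRoot_unitsMulAdd_iff hσ ha hb hz hk hy
  ext r
  constructor
  · rintro ⟨hr, hroot⟩
    have hnotMem : σ a * r ∈ (fixedSubfield σ : Set F)ᶜ := fun hmem =>
      not_hasNonUnitaryRoot_of_mem_fixedSubfield hσ hb hr hmem hroot
    rw [← range_unitsMulAdd hσ hz] at hnotMem
    obtain ⟨p, hp⟩ := hnotMem
    obtain rfl : unitsMulAdd σ z p / σ a = r := by rw [hp, mul_div_cancel_left₀ _ hσa]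
    exact ⟨p, ⟨trivial, (hiff p).1 hroot⟩, rfl⟩
  · rintro ⟨p, ⟨-, hp⟩, rfl⟩
    have hnotMem : unitsMulAdd σ z p ∈ (fixedSubfield σ : Set F)ᶜ :=
      range_unitsMulAdd hσ hz ▸ Set.mem_range_self p
    exact ⟨div_ne_zero (ne_of_mem_of_not_mem (zero_mem _) hnotMem).symm hσa, (hiff p).2 hp⟩

theorem two_mul_ncard_hasNonUnitaryRoot [Finite F] (hσ : Function.Involutive σ)
    (hne : ∃ x, σ x ≠ x) (ha : a ≠ 0) (hb : b ≠ 0) (hab : σ a * a ≠ σ b * b) :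
    2 * {r | r ≠ 0 ∧ HasNonUnitaryRoot σ a b r}.ncard =
      Nat.card (fixedSubfield σ) * (Nat.card (fixedSubfield σ) - 1) := by
  obtain ⟨z, hz⟩ := exists_map_eq_add_one hσ hne
  obtain ⟨y, hy⟩ : ∃ y : fixedSubfield σ, (y : F) = z ^ 2 + z :=
    ⟨⟨_, sq_add_self_mem_fixedSubfield hz⟩, rfl⟩
  obtain ⟨k, hk⟩ : ∃ k : fixedSubfield σ, (k : F) = σ b * b / (σ a * a) :=
    ⟨⟨_, div_mem (map_mul_self_mem_fixedSubfield hσ b) (map_mul_self_mem_fixedSubfield hσ a)⟩, rfl⟩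
  have hk₀ : k ≠ 0 := by
    rw [Ne, Subtype.ext_iff, hk]
    simp [ha, hb]
  have hk₁ : k ≠ 1 := by
    rw [Ne, Subtype.ext_iff, hk]
    exact fun h => hab (eq_of_div_eq_one h).symm
  have hinj : Function.Injective (unitsMulAdd σ z · / σ a) := fun _ _ h =>
    unitsMulAdd_injective hz ((div_left_inj' ((map_ne_zero σ).2 ha)).1 h)
  rw [setOf_hasNonUnitaryRoot_eq_image hσ ha hb hz hk hy, Set.ncard_image_of_injective _ hinj,
    Set.ncard_prod, Set.ncard_univ, Nat.card_units, mul_left_comm,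
    two_mul_ncard_exists_sq_add_self_eq hk₀ hk₁, mul_comm]

end NonUnitaryRoot

section FiniteField

variable {F : Type*} [Field F] [Fintype F] {q : ℕ}

theorem exists_ringHom_eq_pow_of_dvd_card (hq : q ∣ Fintype.card F) :
    ∃ σ : F →+* F, ∀ x, σ x = x ^ q := by
  obtain ⟨p, _, n, hp, hcard⟩ := FiniteField.card' F
  obtain ⟨m, -, rfl⟩ := (Nat.dvd_prime_pow hp).1 (hcard ▸ hq)
  have := Fact.mk hp
  exact ⟨iterateFrobenius F p m, iterateFrobenius_def p m⟩

theorem exists_pow_ne_self (hq : 1 < q) (hcard : q < Fintype.card F) : ∃ x : F, x ^ q ≠ x := by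
  by_contra! hpow
  have hunits (u : Fˣ) : u ^ (q - 1) = 1 := by
    refine mul_right_cancel (b := u) (Units.ext ?_)
    rw [← pow_succ, Nat.sub_add_cancel hq.le, one_mul, Units.val_pow_eq_pow_val, hpow]
  have hle := Nat.le_of_dvd (by omega) ((FiniteField.forall_pow_eq_one_iff F (q - 1)).1 hunits)
  omega

theorem charP_two_of_even_card (hF : Even (Fintype.card F)) : CharP F 2 :=
  ringChar.of_eq (FiniteField.even_card_iff_char_two.2 (Nat.even_iff.1 hF))

end FiniteField

/-- Let `q` be an even prime power (a power of 2) and `F` a finite field with `q^2`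
elements.  Let `a, b ∈ F` be nonzero with `a^(q+1) ≠ b^(q+1)`, and let
`R₂ = {r ≠ 0 : b·r·X² + (a^q·r − a·r^q)·X − (b·r)^q = 0 has a root s with s^(q+1) ≠ 1}`.
Then `|R₂| = q(q−1)/2`. -/
theorem card_R2_even (q : ℕ) (hq : IsPrimePow q) (heven : Even q)
    (F : Type*) [Field F] [Fintype F] (hF : Fintype.card F = q ^ 2)
    (a b : F) (ha : a ≠ 0) (hb : b ≠ 0) (hab : a ^ (q + 1) ≠ b ^ (q + 1)) :
    Set.ncard {r : F | r ≠ 0 ∧ ∃ s : F, s ^ (q + 1) ≠ 1 ∧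
        b * r * s ^ 2 + (a ^ q * r - a * r ^ q) * s - (b * r) ^ q = 0} =
      q * (q - 1) / 2 := by
  have := charP_two_of_even_card (hF ▸ heven.pow_of_ne_zero two_ne_zero : Even (Fintype.card F))
  obtain ⟨σ, hσ⟩ := exists_ringHom_eq_pow_of_dvd_card (hF ▸ dvd_pow_self q two_ne_zero)
  have hinvol : Function.Involutive σ := fun x => by
    rw [hσ, hσ, ← pow_mul, ← sq, ← hF, FiniteField.pow_card]
  have hne : ∃ x, σ x ≠ x := by
    simpa only [hσ] using exists_pow_ne_self hq.one_lt (hF ▸ lt_self_pow₀ hq.one_lt one_lt_two)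
  have hK : Nat.card (fixedSubfield σ) = q := by
    refine Nat.pow_left_injective two_ne_zero ?_
    simpa [hF] using (card_eq_card_fixedSubfield_sq hinvol hne).symm
  have hcount := two_mul_ncard_hasNonUnitaryRoot hinvol hne ha hb
    (by simpa only [hσ, ← pow_succ] using hab)
  simp only [HasNonUnitaryRoot, hσ, ← pow_succ, hK] at hcount
  omega
end
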